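/- arXiv:1612.03229 — 3 statements merged into one kernel-verified Lean document; each statement's English description precedes it below -/
import Mathlib

section
/- Let O be the order of conductor f in an imaginary quadratic field, and let ℓ^a > 2 be a prime power with ℓ not dividing f and ℓ ramified in O (i.e. ℓ is neither split nor inert in O). Then the set of elements of O/ℓ^a O of additive order ℓ^a decomposes into exactly two orbits under the multiplication action of (O/ℓ^a O)^×: one orbit of cardinality ℓ^{2a−2}(ℓ−1) and one orbit of cardinality ℓ^{2a−1}(ℓ−1). -/
set_option synthInstance.maxHeartbeats 1000000
set_option maxHeartbeats 1000000

open NumberField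

/-- `K` is an imaginary quadratic field: a number field of degree `2` over `ℚ`
with no real embedding. -/
def IsImagQuadratic (K : Type*) [Field K] [NumberField K] : Prop :=
  Module.finrank ℚ K = 2 ∧ IsEmpty (K →+* ℝ)

/-- `O = ℤ + f·𝓞_K` is the order of conductor `f` in the number field `K`,
viewed as a subalgebra of `K`. -/
def IsOrderOfConductor (K : Type*) [Field K] [NumberField K] (f : ℕ)
    (O : Subalgebra ℤ K) : Prop :=
  ∀ x : K, x ∈ O ↔ ∃ (a : ℤ) (y : 𝓞 K), x = (a : K) + (f : K) * (algebraMap (𝓞 K) K y)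

/-- The prime `ℓ` is *split* in the ring `R`: `R/ℓR ≅ ℤ/ℓ × ℤ/ℓ` as rings. -/
def SplitsIn (R : Type*) [CommRing R] (ℓ : ℕ) : Prop :=
  Nonempty ((R ⧸ Ideal.span {(ℓ : R)}) ≃+* ZMod ℓ × ZMod ℓ)

/-- The prime `ℓ` is *inert* in the ring `R`: `R/ℓR` is a field. -/
def InertIn (R : Type*) [CommRing R] (ℓ : ℕ) : Prop :=
  IsField (R ⧸ Ideal.span {(ℓ : R)})


theorem aux_bij {p : ℕ} [Fact p.Prime] {S : Type*} [CommRing S] [Algebra (ZMod p) S]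
    (hc : Nat.card S = p ^ 2) (x : S) (hx : ∀ c : ZMod p, x ≠ algebraMap _ _ c) :
    Function.Bijective (fun q : ZMod p × ZMod p =>
      algebraMap (ZMod p) S q.1 + algebraMap (ZMod p) S q.2 * x) := by
  have hp : 0 < p := (Fact.out : p.Prime).pos
  have hfin : Finite S := Nat.finite_of_card_ne_zero (by rw [hc]; positivity)
  have hnt : Nontrivial S := by
    refine ⟨x, 0, ?_⟩
    have := hx 0
    simpa using this
  rw [Nat.bijective_iff_injective_and_card]
  refine ⟨?_, by simp [hc, sq]⟩
  rintro ⟨a, b⟩ ⟨c, d⟩ h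
  simp only at h
  by_cases hbd : b = d
  · subst hbd
    have := (algebraMap (ZMod p) S).injective (add_right_cancel h)
    rw [this]
  · exfalso
    have hne : b - d ≠ 0 := sub_ne_zero.2 hbd
    have h1 : algebraMap (ZMod p) S (b - d)⁻¹ * algebraMap (ZMod p) S (b - d) = 1 := by
      rw [← map_mul, inv_mul_cancel₀ hne, map_one]
    apply hx ((b - d)⁻¹ * (c - a))
    simp only [map_mul, map_sub] at h1 ⊢
    linear_combination (algebraMap (ZMod p) S (b - d)⁻¹) * h - x * h1

theorem aux_S {p : ℕ} [Fact p.Prime] {S : Type*} [CommRing S] [Algebra (ZMod p) S]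
    (hc : Nat.card S = p ^ 2) (hf : ¬ IsField S) (hs : ¬ Nonempty (S ≃+* ZMod p × ZMod p)) :
    ∃ x : S, x ^ 2 = 0 ∧ Function.Bijective (fun q : ZMod p × ZMod p =>
      algebraMap (ZMod p) S q.1 + algebraMap (ZMod p) S q.2 * x) := by
  have hp : 1 < p := (Fact.out : p.Prime).one_lt
  have hfin : Finite S := Nat.finite_of_card_ne_zero (by rw [hc]; positivity)
  have hnt : Nontrivial S := by
    rw [← Finite.one_lt_card_iff_nontrivial, hc]
    exact Nat.one_lt_pow (by norm_num) hp
  obtain ⟨x, hx0, hxu⟩ : ∃ x : S, x ≠ 0 ∧ ¬ IsUnit x := by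
    by_contra! h
    refine hf ⟨⟨0, 1, zero_ne_one⟩, mul_comm, fun {x} hx => ?_⟩
    exact (h x hx).exists_right_inv
  have hx : ∀ c : ZMod p, x ≠ algebraMap _ _ c := by
    rintro c rfl
    have hc0 : c ≠ 0 := by rintro rfl; simp at hx0
    exact hxu ((IsUnit.mk0 c hc0).map _)
  have hb := aux_bij hc x hx
  obtain ⟨⟨a, b⟩, hab⟩ := hb.2 (x ^ 2)
  simp only at hab
  have ha : a = 0 := by
    by_contra ha
    have h1 : algebraMap (ZMod p) S a⁻¹ * algebraMap (ZMod p) S a = 1 := by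
      rw [← map_mul, inv_mul_cancel₀ ha, map_one]
    apply hxu
    refine IsUnit.of_mul_eq_one (algebraMap (ZMod p) S a⁻¹ * (x - algebraMap (ZMod p) S b)) ?_
    linear_combination h1 - (algebraMap (ZMod p) S a⁻¹) * hab
  subst ha
  by_cases hb0 : b = 0
  · subst hb0
    exact ⟨x, by simpa using hab.symm, hb⟩
  exfalso
  apply hs
  have h1 : algebraMap (ZMod p) S b⁻¹ * algebraMap (ZMod p) S b = 1 := by
    rw [← map_mul, inv_mul_cancel₀ hb0, map_one]
  obtain ⟨e, he⟩ : ∃ e, e = algebraMap (ZMod p) S b⁻¹ * x := ⟨_, rfl⟩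
  have hee : e * e = e := by
    subst he
    simp only [map_zero, zero_add] at hab
    linear_combination - (algebraMap (ZMod p) S b⁻¹) ^2 * hab + (algebraMap (ZMod p) S b⁻¹) * x * h1
  have hxe : x = algebraMap (ZMod p) S b * e := by
    subst he; linear_combination -x * h1
  have hbe := aux_bij hc e (by
    intro c hce
    apply hx (b * c)
    rw [hxe, hce, map_mul])
  let F : ZMod p × ZMod p →+* S :=
    { toFun := fun q => algebraMap (ZMod p) S q.1 + algebraMap (ZMod p) S (q.2 - q.1) * e
      map_one' := by simp
      map_zero' := by simp
      map_add' := by intro q r; simp; ring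
      map_mul' := by
        intro q r; simp
        linear_combination -(algebraMap (ZMod p) S q.2 - algebraMap (ZMod p) S q.1) * (algebraMap (ZMod p) S r.2 - algebraMap (ZMod p) S r.1) * hee }
  have hF : Function.Bijective F := by
    rw [Nat.bijective_iff_injective_and_card]
    refine ⟨?_, by simp [hc, sq]⟩
    rintro ⟨a, b⟩ ⟨c, d⟩ h
    have := @hbe.1 (a, b - a) (c, d - c) h
    simp only [Prod.mk.injEq] at this
    obtain ⟨rfl, h2⟩ := this
    simp at h2
    rw [h2]
  exact ⟨(RingEquiv.ofBijective F hF).symm⟩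

theorem aux_card {n : ℕ} (hn : 0 < n) {A : Type*} [CommRing A] (e : A ≃ₗ[ℤ] (Fin 2 → ℤ)) :
    Nat.card (A ⧸ Ideal.span {(n : A)}) = n ^ 2 := by
  let g : A →+ (Fin 2 → ZMod n) :=
    { toFun := fun x i => (e x i : ZMod n)
      map_zero' := by ext; simp
      map_add' := by intro x y; ext; simp }
  have hg : Function.Surjective g := by
    intro v
    refine ⟨e.symm (fun i => (v i).cast), ?_⟩
    ext i
    simp [g]
  have hk : (Ideal.span {(n : A)}).toAddSubgroup = g.ker := by
    ext x
    rw [AddMonoidHom.mem_ker]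
    change x ∈ Ideal.span {(n : A)} ↔ _
    rw [Ideal.mem_span_singleton]
    constructor
    · rintro ⟨y, rfl⟩
      ext i
      have : (n : A) * y = (n : ℤ) • y := by simp
      simp only [g, AddMonoidHom.coe_mk, ZeroHom.coe_mk, this, map_smul]
      simp
    · intro h
      have : ∀ i, (n : ℤ) ∣ e x i := fun i => by
        rw [← ZMod.intCast_zmod_eq_zero_iff_dvd _ n] <;> exact congrFun h i
      choose y hy using this
      refine ⟨e.symm y, ?_⟩
      apply e.injective
      have : (n : A) * e.symm y = (n : ℤ) • e.symm y := by simp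
      rw [this, map_smul, e.apply_symm_apply]
      ext i; simp [hy]
  have h2 : Nat.card (A ⧸ (Ideal.span {(n : A)}).toAddSubgroup) = n ^ 2 := by
    rw [hk, Nat.card_congr (QuotientAddGroup.quotientKerEquivOfSurjective g hg).toEquiv, Nat.card_fun, Nat.card_zmod,
      Nat.card_eq_fintype_card, Fintype.card_fin]
  exact h2

theorem aux_fib {R S : Type*} [AddCommGroup R] [AddCommGroup S] [Finite R] (g : R →+ S)
    (hg : Function.Surjective g) (T : Set S) :
    Nat.card (g ⁻¹' T) = Nat.card g.ker * Nat.card T := by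
  rw [← Nat.card_prod]
  let s := Function.surjInv hg
  have hs : ∀ y, g (s y) = y := Function.surjInv_eq hg
  symm
  refine Nat.card_congr
    { toFun := fun q => ⟨q.1 + s q.2, by simp [hs, g.mem_ker.1 q.1.2]⟩
      invFun := fun x => ⟨⟨x - s (g x), by simp [g.mem_ker, hs]⟩, ⟨g x, x.2⟩⟩
      left_inv := ?_
      right_inv := ?_ }
  · rintro ⟨⟨k, hk⟩, ⟨t, ht⟩⟩
    simp [hs, g.mem_ker.1 hk]
  · rintro ⟨x, hx⟩
    simp

theorem aux_main {ℓ : ℕ} (hℓ : ℓ.Prime) {a : ℕ} (ha : 1 ≤ a) {A : Type*} [CommRing A]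
    (e : A ≃ₗ[ℤ] (Fin 2 → ℤ))
    (hn : ∀ (x y : A) (n : ℤ), x ^ 2 = ℓ * (n * x) + ℓ ^ 2 * y → (ℓ : A) ∣ x)
    (hf : ¬ IsField (A ⧸ Ideal.span {(ℓ : A)}))
    (hs : ¬ Nonempty ((A ⧸ Ideal.span {(ℓ : A)}) ≃+* ZMod ℓ × ZMod ℓ)) :
    ∃ P Q : A ⧸ Ideal.span {((ℓ ^ a : ℕ) : A)},
      addOrderOf P = ℓ ^ a ∧ addOrderOf Q = ℓ ^ a ∧
      Nat.card ↥(MulAction.orbit (A ⧸ Ideal.span {((ℓ ^ a : ℕ) : A)})ˣ P) =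
        ℓ ^ (2 * a - 2) * (ℓ - 1) ∧
      Nat.card ↥(MulAction.orbit (A ⧸ Ideal.span {((ℓ ^ a : ℕ) : A)})ˣ Q) =
        ℓ ^ (2 * a - 1) * (ℓ - 1) ∧
      MulAction.orbit (A ⧸ Ideal.span {((ℓ ^ a : ℕ) : A)})ˣ P ≠
        MulAction.orbit (A ⧸ Ideal.span {((ℓ ^ a : ℕ) : A)})ˣ Q ∧
      {x : A ⧸ Ideal.span {((ℓ ^ a : ℕ) : A)} | addOrderOf x = ℓ ^ a} =
        MulAction.orbit (A ⧸ Ideal.span {((ℓ ^ a : ℕ) : A)})ˣ P ∪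
          MulAction.orbit (A ⧸ Ideal.span {((ℓ ^ a : ℕ) : A)})ˣ Q := by
  have : Fact ℓ.Prime := ⟨hℓ⟩
  have hl0 : 0 < ℓ := hℓ.pos
  have hcS := aux_card hl0 e
  have hcR := aux_card (pow_pos hl0 a) e
  have hle : Ideal.span {((ℓ ^ a : ℕ) : A)} ≤ Ideal.span {(ℓ : A)} := by
    rw [Ideal.span_singleton_le_span_singleton]
    push_cast
    exact dvd_pow_self _ (by omega)
  let φ := Ideal.Quotient.factor hle
  have hφ : Function.Surjective φ := Ideal.Quotient.factor_surjective hle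
  have hφmk : ∀ x : A, φ (Ideal.Quotient.mk _ x) = Ideal.Quotient.mk _ x := fun x => rfl
  have hmkS : ∀ x : A, (Ideal.Quotient.mk (Ideal.span {(ℓ : A)}) x) = 0 ↔ (ℓ : A) ∣ x := fun x => by
    rw [Ideal.Quotient.eq_zero_iff_mem, Ideal.mem_span_singleton]
  have hmkR : ∀ x : A, (Ideal.Quotient.mk (Ideal.span {((ℓ ^ a : ℕ) : A)}) x) = 0 ↔
      (ℓ : A) ^ a ∣ x := fun x => by
    rw [Ideal.Quotient.eq_zero_iff_mem, Ideal.mem_span_singleton]; push_cast; rfl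
  clear_value φ
  have hcancel : ∀ x : A, (ℓ : A) * x = 0 → x = 0 := by
    intro x hx
    have h1 : (ℓ : ℤ) • e x = 0 := by
      rw [← map_smul]; simp [hx]
    have h2 : e x = 0 := (smul_eq_zero.1 h1).resolve_left (by exact_mod_cast hl0.ne')
    simpa using h2
  have hcancelp : ∀ (k : ℕ) (x : A), (ℓ : A) ^ k * x = 0 → x = 0 := by
    intro k
    induction k with
    | zero => intro x; simp
    | succ k ih => intro x hx; exact hcancel x (ih _ (by rw [← hx]; ring))
  have hSfin : Finite (A ⧸ Ideal.span {(ℓ : A)}) :=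
    Nat.finite_of_card_ne_zero (by rw [hcS]; positivity)
  have hRfin : Finite (A ⧸ Ideal.span {((ℓ ^ a : ℕ) : A)}) :=
    Nat.finite_of_card_ne_zero (by rw [hcR]; positivity)
  have hSnt : Nontrivial (A ⧸ Ideal.span {(ℓ : A)}) := by
    rw [← Finite.one_lt_card_iff_nontrivial, hcS]
    exact Nat.one_lt_pow (by norm_num) hℓ.one_lt
  have : CharP (A ⧸ Ideal.span {(ℓ : A)}) ℓ := by
    refine CharP.quotient A ℓ fun hu => ?_
    rw [← Ideal.span_singleton_eq_top] at hu
    exact (Ideal.Quotient.nontrivial_iff.1 hSnt) hu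
  let _ : Algebra (ZMod ℓ) (A ⧸ Ideal.span {(ℓ : A)}) := ZMod.algebra _ ℓ
  obtain ⟨ε, hε2, hE⟩ := aux_S hcS hf hs
  obtain ⟨E, hEdef⟩ : ∃ E : ZMod ℓ × ZMod ℓ → (A ⧸ Ideal.span {(ℓ : A)}),
    ∀ q, E q = algebraMap (ZMod ℓ) _ q.1 + algebraMap (ZMod ℓ) _ q.2 * ε := ⟨_, fun q => rfl⟩
  replace hE : Function.Bijective E := by
    convert hE using 1
    ext q; exact hEdef q
  obtain ⟨π, rfl⟩ := Ideal.Quotient.mk_surjective ε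
  have hE0 : E 0 = 0 := by simp [hEdef]
  have hε : E (0, 1) = Ideal.Quotient.mk _ π := by simp [hEdef]
  have hε0 : Ideal.Quotient.mk (Ideal.span {(ℓ : A)}) π ≠ 0 := by
    rw [← hε, ← hE0]
    intro h
    have := hE.1 h
    simp [Prod.ext_iff] at this
  -- units of S
  have hUS : ∀ q, IsUnit (E q) ↔ q.1 ≠ 0 := by
    intro q
    rw [hEdef]
    constructor
    · intro hu h0
      rw [h0, map_zero, zero_add] at hu
      have h2 := hu.pow 2
      rw [mul_pow, hε2, mul_zero] at h2
      exact not_isUnit_zero h2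
    · intro h0
      refine IsNilpotent.isUnit_add_left_of_commute ⟨2, ?_⟩ ((IsUnit.mk0 _ h0).map _) (Commute.all _ _)
      rw [mul_pow, hε2, mul_zero]
  -- kernel nilpotent
  have hnil : ∀ r, φ r = 0 → IsNilpotent r := by
    intro r hr
    obtain ⟨x, rfl⟩ := Ideal.Quotient.mk_surjective r
    rw [hφmk, hmkS] at hr
    refine ⟨a, ?_⟩
    rw [← map_pow, hmkR]
    exact pow_dvd_pow_of_dvd hr a
  have hUR : ∀ r, IsUnit (φ r) ↔ IsUnit r := by
    intro r
    refine ⟨fun h => ?_, fun h => h.map φ⟩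
    obtain ⟨s, hs⟩ := h.exists_right_inv
    obtain ⟨s, rfl⟩ := hφ s
    have h1 : IsNilpotent (r * s - 1) := hnil _ (by simp [hs])
    have h2 : IsUnit (r * s) := by
      have := h1.isUnit_add_left_of_commute isUnit_one (Commute.all _ _)
      simpa using this
    exact isUnit_of_mul_isUnit_left h2
  have hord : ∀ r : A ⧸ Ideal.span {((ℓ ^ a : ℕ) : A)}, addOrderOf r = ℓ ^ a ↔ φ r ≠ 0 := by
    intro r
    obtain ⟨x, rfl⟩ := Ideal.Quotient.mk_surjective r
    obtain ⟨b, rfl⟩ : ∃ b, a = b + 1 := ⟨a - 1, by omega⟩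
    have key : ∀ k : ℕ, (ℓ ^ k) • (Ideal.Quotient.mk (Ideal.span {((ℓ ^ (b + 1) : ℕ) : A)}) x) =
        Ideal.Quotient.mk _ ((ℓ : A) ^ k * x) := by
      intro k; simp [nsmul_eq_mul]
    rw [hφmk, Ne, hmkS]
    constructor
    · rintro h ⟨y, rfl⟩
      have h2 : addOrderOf (Ideal.Quotient.mk (Ideal.span {((ℓ ^ (b + 1) : ℕ) : A)}) (ℓ * y)) ∣ ℓ ^ b := by
        rw [addOrderOf_dvd_iff_nsmul_eq_zero, key, hmkR]
        exact ⟨y, by ring⟩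
      rw [h] at h2
      have := Nat.le_of_dvd (by positivity) h2
      have := Nat.pow_lt_pow_right hℓ.one_lt (Nat.lt_add_one b)
      omega
    · intro h
      apply addOrderOf_eq_prime_pow
      · rw [key, hmkR]
        rintro ⟨y, hy⟩
        apply h
        refine ⟨y, ?_⟩
        have := hcancelp b (x - ℓ * y) (by rw [mul_sub, hy]; ring)
        exact sub_eq_zero.1 this
      · rw [key, hmkR]
        exact ⟨x, rfl⟩
  -- π^2 = ℓ z with z a unit
  obtain ⟨z, hz⟩ : (ℓ : A) ∣ π ^ 2 := by rwa [← map_pow, hmkS] at hε2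
  have hcoord : ∀ x : A, ∃ (q : ZMod ℓ × ZMod ℓ) (m n : ℤ) (y : A), q = (↑m, ↑n) ∧
      Ideal.Quotient.mk _ x = E q ∧ x = m + n * π + ℓ * y := by
    intro x
    obtain ⟨q, hq⟩ := hE.2 (Ideal.Quotient.mk _ x)
    obtain ⟨m, hm⟩ := ZMod.intCast_surjective q.1
    obtain ⟨n, hn⟩ := ZMod.intCast_surjective q.2
    have : (ℓ : A) ∣ x - (m + n * π) := by
      rw [← hmkS]
      simp only [map_sub, map_add, map_mul, ← hq, hEdef, ← hm, ← hn, map_intCast]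
      ring
    obtain ⟨y, hy⟩ := this
    exact ⟨q, m, n, y, Prod.ext hm.symm hn.symm, hq.symm, by linear_combination hy⟩
  have hzS : IsUnit (Ideal.Quotient.mk (Ideal.span {(ℓ : A)}) z) := by
    obtain ⟨q, m, n, y, hq, hzq, hzy⟩ := hcoord z
    rw [hzq, hUS]
    intro h0
    rw [hq] at h0
    simp only at h0
    rw [ZMod.intCast_zmod_eq_zero_iff_dvd] at h0
    obtain ⟨m', rfl⟩ := h0
    apply hε0
    rw [hmkS]
    refine hn π (m' + y) n ?_
    rw [hz, hzy]; push_cast; ring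
  have hzR : IsUnit (Ideal.Quotient.mk (Ideal.span {((ℓ ^ a : ℕ) : A)}) z) := by
    rw [← hUR, hφmk]; exact hzS
  obtain ⟨w, hw⟩ := hzR.exists_right_inv
  have horbQ : MulAction.orbit (A ⧸ Ideal.span {((ℓ ^ a : ℕ) : A)})ˣ
      (1 : A ⧸ Ideal.span {((ℓ ^ a : ℕ) : A)}) = φ ⁻¹' (E '' ({0}ᶜ ×ˢ Set.univ)) := by
    ext r
    simp only [MulAction.mem_orbit_iff, Units.smul_def, smul_eq_mul, mul_one, Set.mem_preimage,
      Set.mem_image, Set.mem_prod, Set.mem_univ, and_true, Set.mem_compl_iff, Set.mem_singleton_iff]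
    obtain ⟨q, hq⟩ := hE.2 (φ r)
    change IsUnit r ↔ _
    rw [← hUR, ← hq, hUS]
    constructor
    · intro h; exact ⟨q, h, rfl⟩
    · rintro ⟨q', h, h'⟩
      rwa [← hE.1 h']
  have horbP : MulAction.orbit (A ⧸ Ideal.span {((ℓ ^ a : ℕ) : A)})ˣ
      (Ideal.Quotient.mk (Ideal.span {((ℓ ^ a : ℕ) : A)}) π) = φ ⁻¹' (E '' ({0} ×ˢ {0}ᶜ)) := by
    ext r
    simp only [MulAction.mem_orbit_iff, Units.smul_def, smul_eq_mul, Set.mem_preimage,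
      Set.mem_image, Set.mem_prod, Set.mem_compl_iff, Set.mem_singleton_iff]
    constructor
    · rintro ⟨u, rfl⟩
      obtain ⟨q, hq⟩ := hE.2 (φ u)
      have hu := u.isUnit
      rw [← hUR, ← hq, hUS] at hu
      refine ⟨(0, q.1), ⟨rfl, hu⟩, ?_⟩
      rw [map_mul, hφmk, ← hq, hEdef, hEdef]
      simp only [map_zero]
      linear_combination -(algebraMap (ZMod ℓ) (A ⧸ Ideal.span {(ℓ : A)}) q.2) * hε2
    · rintro ⟨q', ⟨h0, h1⟩, hq'⟩
      obtain ⟨x, rfl⟩ := Ideal.Quotient.mk_surjective r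
      obtain ⟨q, m, n, y, hq, hxq, hxy⟩ := hcoord x
      rw [hφmk, hxq] at hq'
      obtain rfl := hE.1 hq'
      rw [hq] at h0 h1
      simp only at h0 h1
      rw [ZMod.intCast_zmod_eq_zero_iff_dvd] at h0
      obtain ⟨m', rfl⟩ := h0
      have hun : IsUnit ((n : A ⧸ Ideal.span {((ℓ ^ a : ℕ) : A)}) +
          Ideal.Quotient.mk _ π * w * Ideal.Quotient.mk _ (m' + y)) := by
        rw [← hUR]
        obtain ⟨⟨s, t⟩, hst⟩ := hE.2 (φ (w * Ideal.Quotient.mk _ (m' + y)))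
        have : φ ((n : A ⧸ Ideal.span {((ℓ ^ a : ℕ) : A)}) +
          Ideal.Quotient.mk _ π * w * Ideal.Quotient.mk _ (m' + y)) = E (n, s) := by
          rw [mul_assoc, map_add, map_mul, ← hst, hφmk, hEdef, hEdef]
          simp only [map_intCast]
          linear_combination (algebraMap (ZMod ℓ) (A ⧸ Ideal.span {(ℓ : A)}) t) * hε2
        rw [this, hUS]
        exact h1
      obtain ⟨u, hu⟩ := hun
      refine ⟨u, ?_⟩
      rw [hu, hxy]
      have hzR' := congrArg (Ideal.Quotient.mk (Ideal.span {((ℓ ^ a : ℕ) : A)})) hz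
      simp only [map_add, map_mul, map_pow, map_intCast, map_natCast, Int.cast_mul,
        Int.cast_natCast] at hzR' ⊢
      linear_combination (w * (m' + Ideal.Quotient.mk _ y)) * hzR' +
        (ℓ * (m' + Ideal.Quotient.mk _ y)) * hw
  have hker : Nat.card φ.toAddMonoidHom.ker = ℓ ^ (2 * a - 2) := by
    have h := aux_fib φ.toAddMonoidHom hφ Set.univ
    rw [Set.preimage_univ, Nat.card_coe_set_eq, Nat.card_coe_set_eq, Set.ncard_univ,
      Set.ncard_univ, hcS, hcR] at h
    refine Nat.eq_of_mul_eq_mul_right (pow_pos hl0 2) (h.symm.trans ?_)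
    rw [← pow_mul, ← pow_add]
    congr 1; omega
  have hcompl : Nat.card ↥({0}ᶜ : Set (ZMod ℓ)) = ℓ - 1 := by
    rw [Nat.card_coe_set_eq, Set.ncard_compl, Set.ncard_singleton, Nat.card_zmod]
  have hcP : Nat.card ↥(MulAction.orbit (A ⧸ Ideal.span {((ℓ ^ a : ℕ) : A)})ˣ
      (Ideal.Quotient.mk (Ideal.span {((ℓ ^ a : ℕ) : A)}) π)) = ℓ ^ (2 * a - 2) * (ℓ - 1) := by
    rw [horbP]
    have h := aux_fib φ.toAddMonoidHom hφ (E '' ({0} ×ˢ {0}ᶜ))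
    refine h.trans ?_
    rw [hker, Nat.card_image_of_injective hE.1, Nat.card_coe_set_eq, Set.ncard_prod,
      ← Nat.card_coe_set_eq, ← Nat.card_coe_set_eq, hcompl]
    simp
  have hcQ : Nat.card ↥(MulAction.orbit (A ⧸ Ideal.span {((ℓ ^ a : ℕ) : A)})ˣ
      (1 : A ⧸ Ideal.span {((ℓ ^ a : ℕ) : A)})) = ℓ ^ (2 * a - 1) * (ℓ - 1) := by
    rw [horbQ]
    have h := aux_fib φ.toAddMonoidHom hφ (E '' ({0}ᶜ ×ˢ Set.univ))
    refine h.trans ?_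
    rw [hker, Nat.card_image_of_injective hE.1, Nat.card_coe_set_eq, Set.ncard_prod,
      ← Nat.card_coe_set_eq, hcompl, Set.ncard_univ, Nat.card_zmod]
    obtain ⟨b, rfl⟩ : ∃ b, a = b + 1 := ⟨a - 1, by omega⟩
    have e1 : 2 * (b + 1) - 1 = (2 * (b + 1) - 2) + 1 := by omega
    rw [e1, pow_succ]; ring
  refine ⟨Ideal.Quotient.mk _ π, 1, (hord _).2 ?_, (hord _).2 ?_, hcP, hcQ, ?_, ?_⟩
  · rw [hφmk]; exact hε0
  · rw [map_one]; exact one_ne_zero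
  · intro h
    have h1 := MulAction.mem_orbit_self (M := (A ⧸ Ideal.span {((ℓ ^ a : ℕ) : A)})ˣ)
      (1 : A ⧸ Ideal.span {((ℓ ^ a : ℕ) : A)})
    have h2 := h1
    rw [← h, horbP] at h2
    rw [horbQ] at h1
    obtain ⟨q, hq, hq'⟩ := h1
    obtain ⟨r, hr, hr'⟩ := h2
    have := hE.1 (hq'.trans hr'.symm)
    subst this
    exact hq.1 hr.1
  · ext r
    rw [Set.mem_ofPred_eq, hord, horbP, horbQ, ← Set.preimage_union, ← Set.image_union,
      Set.mem_preimage]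
    obtain ⟨q, hq⟩ := hE.2 (φ r)
    rw [← hq, hE.1.mem_set_image, ← hE0, hE.1.ne_iff]
    obtain ⟨s, t⟩ := q
    simp [Prod.ext_iff]
    tauto

/-- Let `O` be the order of conductor `f` and `ℓ^a > 2` a prime power with
`ℓ ∤ f` and `ℓ` ramified in `O` (neither split nor inert).  The elements of `O/ℓ^a O` of
additive order `ℓ^a` form exactly two orbits under `(O/ℓ^a O)ˣ`: one of cardinality
`ℓ^{2a-2}(ℓ-1)` and one of cardinality `ℓ^{2a-1}(ℓ-1)`. -/
theorem ramified_orbit_structure (K : Type*) [Field K] [NumberField K]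
    (hK : IsImagQuadratic K) (f : ℕ) (hf : 0 < f)
    (O : Subalgebra ℤ K) (hO : IsOrderOfConductor K f O)
    (ℓ : ℕ) (hℓ : ℓ.Prime) (a : ℕ) (ha : 2 < ℓ ^ a)
    (hnd : ¬ ℓ ∣ f) (hram : ¬ SplitsIn (↥O) ℓ ∧ ¬ InertIn (↥O) ℓ) :
    ∃ P Q : ↥O ⧸ Ideal.span {((ℓ ^ a : ℕ) : ↥O)},
      addOrderOf P = ℓ ^ a ∧ addOrderOf Q = ℓ ^ a ∧
      Nat.card ↥(MulAction.orbit (↥O ⧸ Ideal.span {((ℓ ^ a : ℕ) : ↥O)})ˣ P) =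
        ℓ ^ (2 * a - 2) * (ℓ - 1) ∧
      Nat.card ↥(MulAction.orbit (↥O ⧸ Ideal.span {((ℓ ^ a : ℕ) : ↥O)})ˣ Q) =
        ℓ ^ (2 * a - 1) * (ℓ - 1) ∧
      MulAction.orbit (↥O ⧸ Ideal.span {((ℓ ^ a : ℕ) : ↥O)})ˣ P ≠
        MulAction.orbit (↥O ⧸ Ideal.span {((ℓ ^ a : ℕ) : ↥O)})ˣ Q ∧
      {x : ↥O ⧸ Ideal.span {((ℓ ^ a : ℕ) : ↥O)} | addOrderOf x = ℓ ^ a} =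
        MulAction.orbit (↥O ⧸ Ideal.span {((ℓ ^ a : ℕ) : ↥O)})ˣ P ∪
          MulAction.orbit (↥O ⧸ Ideal.span {((ℓ ^ a : ℕ) : ↥O)})ˣ Q := by
  have ha1 : 1 ≤ a := by
    rcases Nat.eq_zero_or_pos a with h | h
    · subst h; simp at ha
    · exact h
  have hint : ∀ x : O, IsIntegral ℤ (x : K) := by
    intro x
    obtain ⟨m, y, h⟩ := (hO x).1 x.2
    rw [h]
    refine IsIntegral.add ?_ (IsIntegral.mul ?_ (RingOfIntegers.isIntegral_coe y))
    · exact isIntegral_algebraMap (R := ℤ) (x := m)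
    · have := isIntegral_algebraMap (R := ℤ) (A := K) (x := (f : ℤ))
      simpa using this
  let i0 : O →+ 𝓞 K :=
    { toFun := fun x => ⟨x, hint x⟩
      map_zero' := rfl
      map_add' := by intro x y; rfl }
  let i1 : O →ₗ[ℤ] 𝓞 K := i0.toIntLinearMap
  have hi1 : Function.Injective i1 := by
    intro x y h
    have := congrArg (algebraMap (𝓞 K) K) h
    exact Subtype.ext this
  let i2 : 𝓞 K →ₗ[ℤ] O :=
    { toFun := fun y => ⟨f * algebraMap (𝓞 K) K y, (hO _).2 ⟨0, y, by simp⟩⟩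
      map_add' := by intro x y; ext; simp; ring
      map_smul' := by intro c x; ext; simp; ring }
  have hfK : (f : K) ≠ 0 := by exact_mod_cast hf.ne'
  have hi2 : Function.Injective i2 := by
    intro x y h
    have h1 : (f : K) * algebraMap (𝓞 K) K x = f * algebraMap (𝓞 K) K y := congrArg Subtype.val h
    exact RingOfIntegers.coe_injective (mul_left_cancel₀ hfK h1)
  have hfinO : Module.Finite ℤ O := Module.Finite.of_injective i1 hi1
  have htf : Module.IsTorsionFree ℤ O := hi1.moduleIsTorsionFree i1 (map_smul i1)
  have hfree : Module.Free ℤ O := Module.free_of_finite_type_torsion_free'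
  have hrk : Module.finrank ℤ O = 2 := by
    have h1 := LinearMap.finrank_le_finrank_of_injective hi1
    have h2 := LinearMap.finrank_le_finrank_of_injective hi2
    rw [RingOfIntegers.rank, hK.1] at h1 h2
    omega
  let e : O ≃ₗ[ℤ] (Fin 2 → ℤ) := (Module.finBasisOfFinrankEq ℤ O hrk).equivFun
  have hlK : (ℓ : K) ≠ 0 := by exact_mod_cast hℓ.ne_zero
  refine aux_main hℓ ha1 e ?_ hram.2 hram.1
  intro x y n hxy
  have hxyK : (x : K) ^ 2 = ℓ * (n * x) + ℓ ^ 2 * y := by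
    have := congrArg (Subtype.val) hxy
    simpa using this
  have hq : IsIntegral ℤ ((x : K) / ℓ) := by
    have hO' : IsIntegral O ((x : K) / ℓ) := by
      refine ⟨Polynomial.X ^ 2 - (Polynomial.C (n : O) * Polynomial.X + Polynomial.C y), ?_, ?_⟩
      · refine Polynomial.monic_X_pow_sub ?_
        exact lt_of_le_of_lt Polynomial.degree_linear_le (by norm_num)
      · simp only [Polynomial.eval₂_sub, Polynomial.eval₂_add, Polynomial.eval₂_mul,
          Polynomial.eval₂_pow, Polynomial.eval₂_X, Polynomial.eval₂_C]
        rw [map_intCast]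
        change _ - (_ + (y : K)) = 0
        field_simp
        linear_combination hxyK
    have : Algebra.IsIntegral ℤ O := Algebra.IsIntegral.of_finite ℤ O
    exact isIntegral_trans _ hO'
  have hcop : IsCoprime (f : ℤ) (ℓ : ℤ) := by
    rw [Nat.isCoprime_iff_coprime]
    exact ((Nat.Prime.coprime_iff_not_dvd hℓ).2 hnd).symm
  obtain ⟨u, v, huv⟩ := hcop
  have hfx : (f : K) * (x / ℓ) ∈ O := (hO _).2 ⟨0, ⟨_, hq⟩, by
    rw [Int.cast_zero, zero_add]; rfl⟩
  refine ⟨u * ⟨_, hfx⟩ + v * x, ?_⟩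
  apply Subtype.ext
  have huvK : (u : K) * f + v * ℓ = 1 := by exact_mod_cast huv
  push_cast
  field_simp
  linear_combination -(x : K) * huvK
end

section
/- Let O be the order of conductor f in an imaginary quadratic field and let ℓ be a prime dividing f. Then there is a ring isomorphism O/ℓO ≅ (ℤ/ℓℤ)[ε]/(ε²), the ring of dual numbers over ℤ/ℓℤ; in particular O/ℓO is a local ring whose maximal ideal has square zero. Moreover, for every positive integer a and every element P ∈ O/ℓ^a O of additive order ℓ^a with annihilator ideal I_P = {x ∈ O : xP = 0}, one has #((O/I_P)^×) = ℓ^c(ℓ−1) for some integer c with a−1 ≤ c ≤ 2a−1; hence every orbit of (O/ℓ^a O)^× on an element of additive order ℓ^a has cardinality ℓ^c(ℓ−1) with a−1 ≤ c ≤ 2a−1. -/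
set_option synthInstance.maxHeartbeats 1000000
set_option maxHeartbeats 1000000

open NumberField

/-- The annihilator ideal `{x : R | x • P = 0}` of an element `P` of an `R`-module. -/
def annIdeal {R M : Type*} [CommRing R] [AddCommGroup M] [Module R M] (P : M) :
    Ideal R where
  carrier := {x | x • P = 0}
  add_mem' := by
    intro a b ha hb
    simp only [Set.mem_setOf_eq] at *
    rw [add_smul, ha, hb, add_zero]
  zero_mem' := zero_smul R P
  smul_mem' := by
    intro c x hx
    simp only [Set.mem_setOf_eq, smul_eq_mul] at *
    rw [mul_smul, hx, smul_zero]

lemma aux_units_subtype (B : Type*) [CommRing B] :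
    Nat.card Bˣ = Nat.card {x : B // IsUnit x} :=
  Nat.card_congr
    { toFun := fun u => ⟨u, u.isUnit⟩
      invFun := fun x => x.2.unit
      left_inv := fun u => by ext; rfl
      right_inv := fun x => by ext; rfl }

lemma aux_units_card {B : Type*} [CommRing B] (p : ℕ) [Fact p.Prime] (ψ : B →+* ZMod p)
    (hψ : ∀ x, IsUnit x ↔ ψ x ≠ 0) (s : ℕ) (hs : Nat.card B = p ^ (s + 1)) :
    Nat.card Bˣ = p ^ s * (p - 1) := by
  have hp : p.Prime := Fact.out
  have hfin : Finite B := Nat.finite_of_card_ne_zero (by rw [hs]; exact pow_ne_zero _ hp.ne_zero)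
  have hsurj : Function.Surjective ψ := ZMod.ringHom_surjective ψ
  have h1 := AddSubgroup.card_mul_index ψ.toAddMonoidHom.ker
  have h2 : ψ.toAddMonoidHom.ker.index = p := by
    rw [AddSubgroup.index_ker, AddMonoidHom.range_eq_top.mpr hsurj]
    simp
  rw [h2, hs, pow_succ] at h1
  have h3 : Nat.card ψ.toAddMonoidHom.ker = p ^ s := Nat.eq_of_mul_eq_mul_right hp.pos h1
  have h4 : Nat.card Bˣ = Nat.card {x : B // IsUnit x} :=
    aux_units_subtype B
  have h5 : Nat.card {x : B // ¬ IsUnit x} = p ^ s := by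
    rw [← h3]
    refine Nat.card_congr (Equiv.subtypeEquivRight fun x => ?_)
    rw [hψ, not_not]
    rfl
  have h6 : Nat.card B = Nat.card {x : B // IsUnit x} + Nat.card {x : B // ¬ IsUnit x} := by
    classical
    rw [← Nat.card_sum]
    exact Nat.card_congr (Equiv.sumCompl _).symm
  rw [h4]
  rw [hs, h5, pow_succ] at h6
  rw [Nat.mul_sub, mul_one]
  omega

lemma aux_quot_card {R : Type*} [CommRing R] (b : Module.Basis (Fin 2) ℤ R) (n : ℕ) [NeZero n] :
    Nat.card (R ⧸ Ideal.span {(n : R)}) = n ^ 2 := by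
  let g : R →+ (Fin 2 → ZMod n) :=
    { toFun := fun x i => ((b.repr x i : ℤ) : ZMod n)
      map_zero' := by ext i; simp
      map_add' := by intro x y; ext i; simp }
  have hg : Function.Surjective g := by
    intro v
    refine ⟨b.equivFun.symm (fun i => ((v i).val : ℤ)), ?_⟩
    ext i
    have : b.repr (b.equivFun.symm (fun i => ((v i).val : ℤ))) i = ((v i).val : ℤ) := by
      rw [← Module.Basis.equivFun_apply, LinearEquiv.apply_symm_apply]
    change ((b.repr (b.equivFun.symm (fun i => ((v i).val : ℤ))) i : ℤ) : ZMod n) = v i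
    rw [this]
    simp
  have hker : g.ker = (Ideal.span {(n : R)}).toAddSubgroup := by
    ext x
    rw [AddMonoidHom.mem_ker, Submodule.mem_toAddSubgroup, Ideal.mem_span_singleton]
    constructor
    · intro h
      have h' : ∀ i, (n : ℤ) ∣ b.repr x i := fun i =>
        (ZMod.intCast_zmod_eq_zero_iff_dvd _ _).mp (congrFun h i)
      choose c hc using h'
      refine ⟨b.equivFun.symm c, ?_⟩
      apply b.equivFun.injective
      have : (n : R) * b.equivFun.symm c = (n : ℤ) • b.equivFun.symm c := by
        rw [zsmul_eq_mul, Int.cast_natCast]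
      rw [this, map_smul, LinearEquiv.apply_symm_apply]
      ext i
      simp [hc i]
    · rintro ⟨y, rfl⟩
      have : (n : R) * y = (n : ℤ) • y := by
        rw [zsmul_eq_mul, Int.cast_natCast]
      ext i
      change ((b.repr ((n : R) * y) i : ℤ) : ZMod n) = 0
      rw [this, map_smul]
      simp
  have h := Nat.card_congr (QuotientAddGroup.quotientKerEquivOfSurjective g hg).toEquiv
  have h2 : g.ker.index = n ^ 2 := by
    rw [AddSubgroup.index, h]
    simp [Nat.card_fun]
  rw [hker] at h2
  exact h2

lemma aux_dual {A : Type*} [CommRing A] (p : ℕ) [Fact p.Prime] [Algebra (ZMod p) A]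
    (hc : Nat.card A = p ^ 2)
    (h : ∀ x : A, ∃ (n : ℤ) (e : A), x = n + e ∧ e * e = 0) :
    Nonempty (A ≃+* DualNumber (ZMod p)) := by
  have hp : p.Prime := Fact.out
  have hfin : Finite A := Nat.finite_of_card_ne_zero (by rw [hc]; exact pow_ne_zero _ hp.ne_zero)
  have hnt : Nontrivial A := by
    rw [← Finite.one_lt_card_iff_nontrivial, hc]
    exact Nat.one_lt_pow two_ne_zero hp.one_lt
  obtain ⟨e, he, hne⟩ : ∃ e : A, e * e = 0 ∧ e ∉ Set.range (algebraMap (ZMod p) A) := by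
    by_contra! hcon
    have hs : Function.Surjective (algebraMap (ZMod p) A) := by
      intro x
      obtain ⟨n, e, rfl, he⟩ := h x
      obtain ⟨c, rfl⟩ := hcon e he
      exact ⟨n + c, by simp⟩
    have := Nat.card_le_card_of_surjective _ hs
    rw [hc, Nat.card_zmod] at this
    nlinarith [hp.one_lt]
  let F : DualNumber (ZMod p) →ₐ[ZMod p] A :=
    DualNumber.lift ⟨(Algebra.ofId (ZMod p) A, e), he, fun _ => mul_comm _ _⟩
  have hF : ∀ x, F x = algebraMap (ZMod p) A x.fst + algebraMap (ZMod p) A x.snd * e := by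
    intro x
    simp [F, DualNumber.lift_apply_apply, Algebra.ofId_apply]
  have hinj : Function.Injective F := by
    rw [injective_iff_map_eq_zero]
    intro x hx
    rw [hF] at hx
    by_cases hb : x.snd = 0
    · rw [hb] at hx
      simp at hx
      ext
      · exact hx
      · exact hb
    · exfalso
      apply hne
      refine ⟨-(x.snd⁻¹ * x.fst), ?_⟩
      have h1 : algebraMap (ZMod p) A x.snd⁻¹ * algebraMap (ZMod p) A x.snd = 1 := by
        rw [← map_mul, inv_mul_cancel₀ hb, map_one]
      rw [map_neg, map_mul]
      linear_combination (-algebraMap (ZMod p) A x.snd⁻¹) * hx + e * h1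
  have hbij : Function.Bijective F := by
    rw [Nat.bijective_iff_injective_and_card]
    refine ⟨hinj, ?_⟩
    rw [hc]
    have : Nat.card (ZMod p × ZMod p) = p ^ 2 := by simp [pow_two]
    exact this
  exact ⟨(RingEquiv.ofBijective F hbij).symm⟩

lemma aux_isUnit {R : Type*} [CommRing R] (p : ℕ) [Fact p.Prime] (φ : R →+* ZMod p)
    (hφ : ∀ x, φ x = 0 → x ^ 2 ∈ Ideal.span {(p : R)}) (a : ℕ) (J : Ideal R)
    (hJ : ((p ^ a : ℕ) : R) ∈ J) (x : R) (hx : φ x ≠ 0) :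
    IsUnit (Ideal.Quotient.mk J x) := by
  obtain ⟨n, hn⟩ := ZMod.natCast_zmod_surjective (φ x)⁻¹
  have h0 : φ (n * x - 1) = 0 := by
    rw [map_sub, map_mul, map_natCast, hn, inv_mul_cancel₀ hx, map_one, sub_self]
  obtain ⟨y, hy⟩ := Ideal.mem_span_singleton.mp (hφ _ h0)
  have hnil : IsNilpotent (Ideal.Quotient.mk J (n * x - 1)) := by
    refine ⟨2 * a, ?_⟩
    rw [← map_pow, Ideal.Quotient.eq_zero_iff_mem, pow_mul, hy, mul_pow]
    apply Ideal.mul_mem_right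
    exact_mod_cast hJ
  have hu := hnil.isUnit_add_one
  rw [← map_one (Ideal.Quotient.mk J), ← map_add, sub_add_cancel, map_mul] at hu
  exact isUnit_of_mul_isUnit_right hu

lemma aux_isUnit_iff {R : Type*} [CommRing R] (p : ℕ) [Fact p.Prime] (φ : R →+* ZMod p)
    (hφ : ∀ x, φ x = 0 → x ^ 2 ∈ Ideal.span {(p : R)}) (a : ℕ) (J : Ideal R)
    (hJ : ((p ^ a : ℕ) : R) ∈ J) (hJ2 : ∀ x ∈ J, φ x = 0) (x : R) :
    IsUnit (Ideal.Quotient.mk J x) ↔ φ x ≠ 0 := by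
  refine ⟨fun h => ?_, aux_isUnit p φ hφ a J hJ x⟩
  have := h.map (Ideal.Quotient.lift J φ hJ2)
  rw [Ideal.Quotient.lift_mk] at this
  exact this.ne_zero

lemma aux_orbit {R : Type*} [CommRing R] (p : ℕ) [Fact p.Prime] (φ : R →+* ZMod p)
    (hφ : ∀ x, φ x = 0 → x ^ 2 ∈ Ideal.span {(p : R)}) (a : ℕ) (ha : 0 < a)
    (hcard : Nat.card (R ⧸ Ideal.span {((p ^ a : ℕ) : R)}) = p ^ (2 * a))
    (P : R ⧸ Ideal.span {((p ^ a : ℕ) : R)}) (hP : addOrderOf P = p ^ a) :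
    ∃ c : ℕ, a - 1 ≤ c ∧ c ≤ 2 * a - 1 ∧
        Nat.card (R ⧸ annIdeal (R := R) P)ˣ = p ^ c * (p - 1) ∧
        Nat.card ↥(MulAction.orbit (R ⧸ Ideal.span {((p ^ a : ℕ) : R)})ˣ P) =
          p ^ c * (p - 1) := by
  have hp : p.Prime := Fact.out
  have hfin : Finite (R ⧸ Ideal.span {((p ^ a : ℕ) : R)}) :=
    Nat.finite_of_card_ne_zero (by rw [hcard]; exact pow_ne_zero _ hp.ne_zero)
  have hmem : ∀ x, x ∈ annIdeal (R := R) P ↔ x • P = 0 := fun x => Iff.rfl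
  have hsm : ∀ x : R, x • P = Ideal.Quotient.mk _ x * P := fun x => by
    rw [Algebra.smul_def]; rfl
  have hA1 := Ideal.mem_span_singleton_self ((p ^ a : ℕ) : R)
  have hA2 : ∀ x ∈ Ideal.span {((p ^ a : ℕ) : R)}, φ x = 0 := by
    intro x hx
    obtain ⟨y, rfl⟩ := Ideal.mem_span_singleton.mp hx
    simp [ha.ne']
  have hle : Ideal.span {((p ^ a : ℕ) : R)} ≤ annIdeal (R := R) P := by
    intro x hx
    rw [hmem, hsm, Ideal.Quotient.eq_zero_iff_mem.mpr hx, zero_mul]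
  have hB1 := hle hA1
  have hB2 : ∀ x ∈ annIdeal (R := R) P, φ x = 0 := by
    intro x hx
    by_contra hne
    have hu := aux_isUnit p φ hφ a _ hA1 x hne
    rw [hmem, hsm, hu.mul_right_eq_zero] at hx
    rw [hx, addOrderOf_zero] at hP
    exact absurd hP (Nat.one_lt_pow ha.ne' hp.one_lt).ne
  have hA := aux_isUnit_iff p φ hφ a _ hA1 hA2
  have hB := aux_isUnit_iff p φ hφ a _ hB1 hB2
  have hdvd : Nat.card (R ⧸ annIdeal (R := R) P) ∣ p ^ (2 * a) := by
    rw [← hcard]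
    exact AddSubgroup.card_dvd_of_surjective (Ideal.Quotient.factor hle).toAddMonoidHom
      (Ideal.Quotient.factor_surjective hle)
  obtain ⟨s, hs, hsc⟩ := (Nat.dvd_prime_pow hp).mp hdvd
  let g : (R ⧸ annIdeal (R := R) P) →ₗ[R] (R ⧸ Ideal.span {((p ^ a : ℕ) : R)}) :=
    Submodule.liftQ _ (LinearMap.toSpanSingleton R _ P) (fun x hx => hx)
  have hg : ∀ x : R, g (Ideal.Quotient.mk _ x) = Ideal.Quotient.mk _ x * P := by
    intro x
    rw [← hsm]
    rfl
  have hginj : Function.Injective g := by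
    rw [injective_iff_map_eq_zero]
    intro x hx
    obtain ⟨x, rfl⟩ := Ideal.Quotient.mk_surjective x
    rw [hg, ← hsm, ← hmem] at hx
    exact Ideal.Quotient.eq_zero_iff_mem.mpr hx
  have has : a ≤ s := by
    have h1 : addOrderOf (1 : R ⧸ annIdeal (R := R) P) = p ^ a := by
      refine Eq.trans ?_ hP
      rw [← addOrderOf_injective g.toAddMonoidHom hginj]
      congr 1
      have := hg 1
      rw [map_one (Ideal.Quotient.mk _), map_one (Ideal.Quotient.mk _), one_mul] at this
      exact this
    have h2 := addOrderOf_dvd_natCard (1 : R ⧸ annIdeal (R := R) P)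
    rw [h1, hsc] at h2
    exact (Nat.pow_dvd_pow_iff_le_right hp.one_lt).mp h2
  obtain ⟨c, rfl⟩ : ∃ c, s = c + 1 := ⟨s - 1, by omega⟩
  have hunits : Nat.card (R ⧸ annIdeal (R := R) P)ˣ = p ^ c * (p - 1) := by
    refine aux_units_card p (Ideal.Quotient.lift _ φ hB2) ?_ c hsc
    intro x
    obtain ⟨x, rfl⟩ := Ideal.Quotient.mk_surjective x
    rw [hB, Ideal.Quotient.lift_mk]
  refine ⟨c, by omega, by omega, hunits, ?_⟩
  have horb : MulAction.orbit (R ⧸ Ideal.span {((p ^ a : ℕ) : R)})ˣ P =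
      g '' {x | IsUnit x} := by
    ext y
    constructor
    · rintro ⟨u, rfl⟩
      obtain ⟨x, hx⟩ := Ideal.Quotient.mk_surjective (u : R ⧸ Ideal.span {((p ^ a : ℕ) : R)})
      refine ⟨Ideal.Quotient.mk _ x, ?_, ?_⟩
      · rw [Set.mem_setOf_eq, hB, ← hA, hx]
        exact u.isUnit
      · rw [hg, hx]
        rfl
    · rintro ⟨x, hx, rfl⟩
      obtain ⟨x, rfl⟩ := Ideal.Quotient.mk_surjective x
      rw [Set.mem_setOf_eq, hB, ← hA] at hx
      obtain ⟨u, hu⟩ := hx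
      refine ⟨u, ?_⟩
      rw [hg, ← hu]
      rfl
  rw [horb, Nat.card_image_of_injective hginj, ← hunits]
  exact (aux_units_subtype _).symm

lemma aux_basis (K : Type*) [Field K] [NumberField K]
    (hK : IsImagQuadratic K) (f : ℕ) (hf : 0 < f)
    (O : Subalgebra ℤ K) (hO : IsOrderOfConductor K f O) :
    Nonempty (Module.Basis (Fin 2) ℤ O) := by
  have hint : ∀ x : O, IsIntegral ℤ (x : K) := by
    intro x
    obtain ⟨n, y, h⟩ := (hO x).mp x.2
    rw [h]
    have h1 : IsIntegral ℤ (n : K) := isIntegral_algebraMap (R := ℤ) (A := K) (x := n)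
    have h2 : IsIntegral ℤ (f : K) := by
      have := isIntegral_algebraMap (R := ℤ) (A := K) (x := (f : ℤ))
      simpa using this
    exact h1.add (h2.mul y.isIntegral_coe)
  let i1 : O →ₗ[ℤ] 𝓞 K := AddMonoidHom.toIntLinearMap
    { toFun := fun x => ⟨x, hint x⟩
      map_zero' := rfl
      map_add' := fun _ _ => rfl }
  have hi1 : Function.Injective i1 := by
    intro x y h
    have := congrArg (algebraMap (𝓞 K) K) h
    exact Subtype.ext this
  let i2 : 𝓞 K →ₗ[ℤ] O := AddMonoidHom.toIntLinearMap
    { toFun := fun y => ⟨(f : K) * algebraMap (𝓞 K) K y, (hO _).mpr ⟨0, y, by simp⟩⟩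
      map_zero' := by ext; simp
      map_add' := fun _ _ => by ext; simp [mul_add] }
  have hi2 : Function.Injective i2 := by
    intro x y h
    have h' : (f : K) * algebraMap (𝓞 K) K x = (f : K) * algebraMap (𝓞 K) K y :=
      congrArg Subtype.val h
    have hf' : (f : K) ≠ 0 := by exact_mod_cast hf.ne'
    exact RingOfIntegers.coe_injective (mul_left_cancel₀ hf' h')
  have hfin : Module.Finite ℤ O := Module.Finite.of_injective i1 hi1
  have hfree : Module.Free ℤ O := inferInstance
  have hr : Module.finrank ℤ O = 2 := by
    have h1 := LinearMap.finrank_le_finrank_of_injective hi1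
    have h2 := LinearMap.finrank_le_finrank_of_injective hi2
    rw [RingOfIntegers.rank, hK.1] at h1 h2
    omega
  exact ⟨Module.finBasisOfFinrankEq ℤ O hr⟩

/-- Let `O` be the order of conductor `f` and `ℓ` a prime dividing `f`.
Then `O/ℓO` is isomorphic to the dual numbers `(ℤ/ℓ)[ε]/(ε²)`; in particular it is local
with maximal ideal of square zero.  Moreover for every `a ≥ 1` and every `P ∈ O/ℓ^a O` of
additive order `ℓ^a`, `#(O/I_P)ˣ = ℓ^c (ℓ-1)` for some `a-1 ≤ c ≤ 2a-1`, and the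
`(O/ℓ^a O)ˣ`-orbit of `P` has that cardinality. -/
theorem conductor_prime_orbit_sizes (K : Type*) [Field K] [NumberField K]
    (hK : IsImagQuadratic K) (f : ℕ) (hf : 0 < f)
    (O : Subalgebra ℤ K) (hO : IsOrderOfConductor K f O)
    (ℓ : ℕ) (hℓ : ℓ.Prime) (hdvd : ℓ ∣ f) :
    Nonempty ((↥O ⧸ Ideal.span {(ℓ : ↥O)}) ≃+* DualNumber (ZMod ℓ)) ∧
    IsLocalRing (↥O ⧸ Ideal.span {(ℓ : ↥O)}) ∧
    (∀ h : IsLocalRing (↥O ⧸ Ideal.span {(ℓ : ↥O)}),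
      (IsLocalRing.maximalIdeal (↥O ⧸ Ideal.span {(ℓ : ↥O)})) ^ 2 = ⊥) ∧
    (∀ a : ℕ, 0 < a → ∀ P : ↥O ⧸ Ideal.span {((ℓ ^ a : ℕ) : ↥O)}, addOrderOf P = ℓ ^ a →
      ∃ c : ℕ, a - 1 ≤ c ∧ c ≤ 2 * a - 1 ∧
        Nat.card (↥O ⧸ annIdeal (R := ↥O) P)ˣ = ℓ ^ c * (ℓ - 1) ∧
        Nat.card ↥(MulAction.orbit (↥O ⧸ Ideal.span {((ℓ ^ a : ℕ) : ↥O)})ˣ P) =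
          ℓ ^ c * (ℓ - 1)) := by
  have : Fact ℓ.Prime := ⟨hℓ⟩
  have : NeZero ℓ := ⟨hℓ.ne_zero⟩
  obtain ⟨b⟩ := aux_basis K hK f hf O hO
  have hc := fun n [NeZero n] => aux_quot_card b n
  have hchar : (ℓ : ↥O ⧸ Ideal.span {(ℓ : ↥O)}) = 0 := by
    have : Ideal.Quotient.mk (Ideal.span {(ℓ : ↥O)}) (ℓ : ↥O) = 0 :=
      Ideal.Quotient.eq_zero_iff_mem.mpr (Ideal.mem_span_singleton_self _)
    rwa [map_natCast] at this
  have hnt : Nontrivial (↥O ⧸ Ideal.span {(ℓ : ↥O)}) := by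
    have : Finite (↥O ⧸ Ideal.span {(ℓ : ↥O)}) :=
      Nat.finite_of_card_ne_zero (by rw [hc]; exact pow_ne_zero _ hℓ.ne_zero)
    rw [← Finite.one_lt_card_iff_nontrivial, hc]
    exact Nat.one_lt_pow two_ne_zero hℓ.one_lt
  have : CharP (↥O ⧸ Ideal.span {(ℓ : ↥O)}) ℓ := by
    have h1 := CharP.ringChar_of_prime_eq_zero hℓ hchar
    exact ringChar.of_eq h1
  letI : Algebra (ZMod ℓ) (↥O ⧸ Ideal.span {(ℓ : ↥O)}) := ZMod.algebra _ ℓ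
  have hiso : Nonempty ((↥O ⧸ Ideal.span {(ℓ : ↥O)}) ≃+* DualNumber (ZMod ℓ)) := by
    refine aux_dual ℓ (hc ℓ) ?_
    intro x
    obtain ⟨x, rfl⟩ := Ideal.Quotient.mk_surjective x
    obtain ⟨n, y, h⟩ := (hO x).mp x.2
    obtain ⟨k, hk⟩ := hdvd
    let z : O := ⟨(f : K) * algebraMap (𝓞 K) K y, (hO _).mpr ⟨0, y, by simp⟩⟩
    let w : O := ⟨(f : K) * algebraMap (𝓞 K) K (y * y), (hO _).mpr ⟨0, y * y, by simp⟩⟩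
    have hz : z * z = (ℓ : O) * ((k : O) * w) := by
      apply Subtype.ext
      change (f : K) * algebraMap (𝓞 K) K y * ((f : K) * algebraMap (𝓞 K) K y) =
        (ℓ : K) * ((k : K) * ((f : K) * algebraMap (𝓞 K) K (y * y)))
      have hk' : (f : K) = ℓ * k := by exact_mod_cast hk
      rw [map_mul, hk']
      ring
    have hx : x = (n : O) + z := Subtype.ext h
    refine ⟨n, Ideal.Quotient.mk _ z, ?_, ?_⟩
    · rw [hx, map_add, map_intCast]
    · rw [← map_mul, hz, map_mul, map_natCast, hchar, zero_mul]
  refine ⟨hiso, ?_⟩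
  obtain ⟨E⟩ := hiso
  have hfst : ∀ d : DualNumber (ZMod ℓ), d.fst = 0 → ∀ d' : DualNumber (ZMod ℓ), d'.fst = 0 →
      d * d' = 0 := by
    intro d hd d' hd'
    ext <;> simp [hd, hd']
  refine ⟨E.symm.isLocalRing, ?_, ?_⟩
  · intro h
    have hm : ∀ x ∈ IsLocalRing.maximalIdeal (↥O ⧸ Ideal.span {(ℓ : ↥O)}), (E x).fst = 0 := by
      intro x hx
      by_contra hne
      rw [IsLocalRing.mem_maximalIdeal, mem_nonunits_iff] at hx
      apply hx
      rw [← MulEquiv.isUnit_map E, TrivSqZeroExt.isUnit_iff_isUnit_fst]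
      exact isUnit_iff_ne_zero.mpr hne
    rw [eq_bot_iff, pow_two, Ideal.mul_le]
    intro x hx y hy
    rw [Ideal.mem_bot]
    apply E.injective
    rw [map_mul, map_zero]
    exact hfst _ (hm x hx) _ (hm y hy)
  · intro a ha P hP
    have : NeZero (ℓ ^ a) := ⟨pow_ne_zero _ hℓ.ne_zero⟩
    let φ : O →+* ZMod ℓ :=
      ((TrivSqZeroExt.fstHom (ZMod ℓ) (ZMod ℓ) (ZMod ℓ) : DualNumber (ZMod ℓ) →+* ZMod ℓ).comp
        (E : (↥O ⧸ Ideal.span {(ℓ : ↥O)}) →+* DualNumber (ZMod ℓ))).comp (Ideal.Quotient.mk _)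
    refine aux_orbit ℓ φ ?_ a ha ?_ P hP
    · intro x hx
      rw [← Ideal.Quotient.eq_zero_iff_mem]
      apply E.injective
      rw [pow_two, map_mul, map_mul, map_zero]
      exact hfst _ hx _ hx
    · rw [hc (ℓ ^ a), ← pow_mul, mul_comm]
end

section
/- Let O be the order of conductor f in an imaginary quadratic field K with ring of integers O_K, and let ℓ^a > 2 be a prime power. Let T̃(O, ℓ^a) denote the least cardinality of an orbit of (O/ℓ^a O)^× on an element of additive order ℓ^a in O/ℓ^a O, and let k = ord_ℓ(f). Then: (1) if ℓ ∤ f, T̃(O, ℓ^a) = ℓ^{a−1}(ℓ−1) if ℓ is split in O, ℓ^{2a−2}(ℓ−1) if ℓ is ramified in O, and ℓ^{2a−2}(ℓ²−1) if ℓ is inert in O; (2) if ℓ ∣ f, T̃(O, ℓ^a) = ℓ^{a−1}(ℓ−1) if ℓ is split in O_K; ℓ^{a−1}(ℓ−1) if ℓ is inert in O_K and a ≤ 2k, and ℓ^{2a−2k−1}(ℓ−1) if ℓ is inert in O_K and a > 2k; ℓ^{a−1}(ℓ−1) if ℓ is ramified in O_K and a ≤ 2k+1, and ℓ^{2a−2k−2}(ℓ−1)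 if ℓ is ramified in O_K and a > 2k+1. -/
set_option synthInstance.maxHeartbeats 1000000
set_option maxHeartbeats 1000000

open NumberField

/-- The set of cardinalities of orbits of `(O/ℓ^a O)ˣ` on elements of `O/ℓ^a O` of additive
order `ℓ^a`; its least element is `T̃(O, ℓ^a)`. -/
def orbitSizes (R : Type*) [CommRing R] (n : ℕ) : Set ℕ :=
  {c : ℕ | ∃ P : R ⧸ Ideal.span {(n : R)}, addOrderOf P = n ∧
    Nat.card ↥(MulAction.orbit (R ⧸ Ideal.span {(n : R)})ˣ P) = c}


abbrev QN (N : ℕ) (m t : ℤ) := QuadraticAlgebra (ZMod N) (m : ZMod N) (t : ZMod N)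

structure QB (R : Type*) [CommRing R] (τ : R) (m t : ℤ) : Prop where
  sq : τ * τ = (m : R) + (t : R) * τ
  span : ∀ z : R, ∃ x y : ℤ, z = (x : R) + (y : R) * τ
  ind : ∀ x y : ℤ, (x : R) + (y : R) * τ = 0 → x = 0 ∧ y = 0

lemma QB.equiv {R : Type*} [CommRing R] {τ : R} {m t : ℤ} (h : QB R τ m t) (N : ℕ) :
    Nonempty ((R ⧸ Ideal.span {(N : R)}) ≃+* QN N m t) := by
  choose X Y hXY using h.span
  have key : ∀ (z : R) (x y : ℤ), z = (x : R) + (y : R) * τ → X z = x ∧ Y z = y := by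
    intro z x y hz
    have := h.ind (X z - x) (Y z - y) (by
      push_cast
      linear_combination hz - hXY z)
    omega
  have hmul : ∀ z w, X (z * w) = X z * X w + m * (Y z * Y w) ∧
      Y (z * w) = X z * Y w + Y z * X w + t * (Y z * Y w) := by
    intro z w
    apply key
    conv_lhs => rw [hXY z, hXY w]
    push_cast
    linear_combination ((Y z : R) * Y w) * h.sq
  have hadd : ∀ z w, X (z + w) = X z + X w ∧ Y (z + w) = Y z + Y w := by
    intro z w
    apply key
    conv_lhs => rw [hXY z, hXY w]
    push_cast
    ring
  have hone := key 1 1 0 (by simp)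
  have hzero := key 0 0 0 (by simp)
  let φ : R →+* QN N m t :=
    { toFun := fun z => ⟨(X z : ZMod N), (Y z : ZMod N)⟩
      map_one' := by ext <;> simp [hone, QuadraticAlgebra.re_one, QuadraticAlgebra.im_one]
      map_zero' := by ext <;> simp [hzero]
      map_mul' := by
        intro z w
        ext <;> simp [hmul] <;> ring
      map_add' := by
        intro z w
        ext <;> simp [hadd] }
  have hsurj : Function.Surjective φ := by
    rintro ⟨x, y⟩
    obtain ⟨x, rfl⟩ := ZMod.intCast_surjective x
    obtain ⟨y, rfl⟩ := ZMod.intCast_surjective y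
    refine ⟨(x : R) + (y : R) * τ, ?_⟩
    obtain ⟨h1, h2⟩ := key _ x y rfl
    change (⟨_, _⟩ : QN N m t) = _
    rw [h1, h2]
  have hker : RingHom.ker φ = Ideal.span {(N : R)} := by
    ext z
    rw [RingHom.mem_ker, Ideal.mem_span_singleton]
    constructor
    · intro hz
      have h1 : (X z : ZMod N) = 0 := congrArg QuadraticAlgebra.re hz
      have h2 : (Y z : ZMod N) = 0 := congrArg QuadraticAlgebra.im hz
      rw [ZMod.intCast_zmod_eq_zero_iff_dvd] at h1 h2
      obtain ⟨c, hc⟩ := h1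
      obtain ⟨d, hd⟩ := h2
      refine ⟨(c : R) + (d : R) * τ, ?_⟩
      conv_lhs => rw [hXY z, hc, hd]
      push_cast
      ring
    · rintro ⟨w, rfl⟩
      rw [map_mul, map_natCast]
      ext <;> simp
  exact ⟨(Ideal.quotEquivOfEq hker.symm).trans (RingHom.quotientKerEquivOfSurjective hsurj)⟩

/-- orbit sizes in a ring -/
def oS (A : Type*) [CommRing A] (n : ℕ) : Set ℕ :=
  {c : ℕ | ∃ P : A, addOrderOf P = n ∧ Nat.card ↥(MulAction.orbit Aˣ P) = c}

lemma oS_sub {A B : Type*} [CommRing A] [CommRing B] (e : A ≃+* B) (n : ℕ) : oS A n ⊆ oS B n := by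
  rintro c ⟨P, hP, hc⟩
  refine ⟨e P, ?_, ?_⟩
  · rw [← hP]
    exact addOrderOf_injective e.toAddMonoidHom e.injective P
  · rw [← hc]
    have : MulAction.orbit Bˣ (e P) = e '' (MulAction.orbit Aˣ P) := by
      ext y
      constructor
      · rintro ⟨u, rfl⟩
        refine ⟨(e.symm u.1) * P, ⟨Units.map e.symm.toMonoidHom u, rfl⟩, ?_⟩
        simp [Units.smul_def]
      · rintro ⟨_, ⟨u, rfl⟩, rfl⟩
        refine ⟨Units.map e.toMonoidHom u, ?_⟩
        simp [Units.smul_def]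
    rw [this, Nat.card_image_of_injective e.injective]

lemma QB.orbitSizes_eq {R : Type*} [CommRing R] {τ : R} {m t : ℤ} (h : QB R τ m t) (N : ℕ) :
    orbitSizes R N = oS (QN N m t) N := by
  obtain ⟨e⟩ := h.equiv N
  exact Set.Subset.antisymm (oS_sub e N) (oS_sub e.symm N)

lemma QB.mod_root_of_split {R : Type*} [CommRing R] {τ : R} {m t : ℤ} (h : QB R τ m t) {l : ℕ}
    (hl : l.Prime) (hs : SplitsIn R l) :
    ∃ r : ℤ, (l : ℤ) ∣ r ^ 2 - t * r - m ∧ ¬ (l : ℤ) ∣ 2 * r - t := by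
  have := Fact.mk hl
  obtain ⟨e0⟩ := hs
  obtain ⟨e1⟩ := h.equiv l
  let e := e1.symm.trans e0
  set W : QN l m t := ⟨0, 1⟩ with hW
  have hWW : W * W = (m : QN l m t) + (t : QN l m t) * W := by
    ext <;> simp [hW]
  have h1 := congrArg e hWW
  simp only [map_mul, map_add, map_intCast] at h1
  obtain ⟨r, hr⟩ := ZMod.intCast_surjective (e W).1
  obtain ⟨s, hs⟩ := ZMod.intCast_surjective (e W).2
  have h2 := congrArg Prod.fst h1
  have h3 := congrArg Prod.snd h1
  simp only [Prod.fst_mul, Prod.fst_add, Prod.fst_intCast, Prod.snd_mul, Prod.snd_add,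
    Prod.snd_intCast, ← hr, ← hs] at h2 h3
  have hne : (r : ZMod l) ≠ s := by
    intro hrs
    obtain ⟨z, hz⟩ := e.surjective (1, 0)
    obtain ⟨x, hx⟩ := ZMod.intCast_surjective z.re
    obtain ⟨y, hy⟩ := ZMod.intCast_surjective z.im
    have hzz : z = (x : QN l m t) + (y : QN l m t) * W := by
      ext <;> simp [hW, hx, hy]
    rw [hzz] at hz
    simp only [map_mul, map_add, map_intCast] at hz
    have h4 := congrArg Prod.fst hz
    have h5 := congrArg Prod.snd hz
    simp only [Prod.fst_mul, Prod.fst_add, Prod.fst_intCast, Prod.snd_mul, Prod.snd_add,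
      Prod.snd_intCast, ← hr, ← hs] at h4 h5
    rw [hrs, h5] at h4
    exact zero_ne_one h4
  have hsum : (r : ZMod l) + s = t := by
    have : ((r : ZMod l) - s) * (r + s - t) = 0 := by linear_combination h2 - h3
    rcases mul_eq_zero.1 this with h | h
    · exact absurd (sub_eq_zero.1 h) hne
    · exact sub_eq_zero.1 h
  refine ⟨r, ?_, ?_⟩
  · rw [← ZMod.intCast_zmod_eq_zero_iff_dvd]
    push_cast
    linear_combination h2
  · rw [← ZMod.intCast_zmod_eq_zero_iff_dvd]
    push_cast
    intro h
    apply hne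
    linear_combination h - hsum

lemma QB.no_root_of_inert {R : Type*} [CommRing R] {τ : R} {m t : ℤ} (h : QB R τ m t) {l : ℕ}
    (hl : l.Prime) (hs : InertIn R l) (r : ℤ) : ¬ (l : ℤ) ∣ r ^ 2 - t * r - m := by
  have := Fact.mk hl
  obtain ⟨e⟩ := h.equiv l
  have hF : IsField (QN l m t) := e.symm.toMulEquiv.isField hs
  have := hF.isDomain
  intro hr
  rw [← ZMod.intCast_zmod_eq_zero_iff_dvd] at hr
  push_cast at hr
  have hz : (⟨-r, 1⟩ : QN l m t) * ⟨r - t, 1⟩ = 0 := by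
    ext
    · simp; linear_combination -hr
    · simp; ring
  rcases mul_eq_zero.1 hz with h | h
  · have := congrArg QuadraticAlgebra.im h
    simp at this
  · have := congrArg QuadraticAlgebra.im h
    simp at this

lemma QB.ram {R : Type*} [CommRing R] {τ : R} {m t : ℤ} (h : QB R τ m t) {l : ℕ}
    (hl : l.Prime) (hs : ¬ SplitsIn R l) (hi : ¬ InertIn R l) :
    ∃ s : ℤ, (l : ℤ) ∣ t - 2 * s ∧ (l : ℤ) ∣ m + s ^ 2 := by
  have := Fact.mk hl
  obtain ⟨e⟩ := h.equiv l
  by_cases hroot : ∃ r : ZMod l, r ^ 2 - t * r - m = 0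
  · obtain ⟨r, hr⟩ := hroot
    by_cases hd : r = t - r
    · obtain ⟨s, rfl⟩ := ZMod.intCast_surjective r
      refine ⟨s, ?_, ?_⟩
      · rw [← ZMod.intCast_zmod_eq_zero_iff_dvd]
        push_cast
        linear_combination -hd
      · rw [← ZMod.intCast_zmod_eq_zero_iff_dvd]
        push_cast
        linear_combination -hr + (s : ZMod l) * hd
    · exfalso
      apply hs
      let φ : QN l m t →+* ZMod l × ZMod l :=
        { toFun := fun z => (z.re + z.im * r, z.re + z.im * (t - r))
          map_one' := by simp [QuadraticAlgebra.re_one, QuadraticAlgebra.im_one]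
          map_zero' := by simp
          map_mul' := by
            intro z w
            ext
            · simp; linear_combination -(z.im * w.im) * hr
            · simp; linear_combination -(z.im * w.im) * hr
          map_add' := by
            intro z w
            ext <;> simp <;> ring }
      have hinj : Function.Injective φ := by
        rw [injective_iff_map_eq_zero]
        intro z hz
        have h1 : z.re + z.im * r = 0 := congrArg Prod.fst hz
        have h2 : z.re + z.im * (t - r) = 0 := congrArg Prod.snd hz
        have h3 : z.im * (r - (t - r)) = 0 := by linear_combination h1 - h2
        have h4 : z.im = 0 := by
          rcases mul_eq_zero.1 h3 with h | h
          · exact h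
          · exact absurd (sub_eq_zero.1 h) hd
        ext
        · simpa [h4] using h1
        · simpa using h4
      have hbij : Function.Bijective φ := by
        refine (Nat.bijective_iff_injective_and_card φ).2 ⟨hinj, ?_⟩
        exact Nat.card_congr (QuadraticAlgebra.equivProd _ _)
      exact ⟨e.trans (RingEquiv.ofBijective φ hbij)⟩
  · exfalso
    apply hi
    push Not at hroot
    apply e.toMulEquiv.isField
    refine ⟨⟨0, 1, zero_ne_one⟩, mul_comm, ?_⟩
    intro z hz
    have hu : IsUnit z := by
      rw [QuadraticAlgebra.isUnit_iff_norm_isUnit, isUnit_iff_ne_zero, QuadraticAlgebra.norm_def]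
      intro h0
      by_cases hy : z.im = 0
      · apply hz
        ext
        · simpa [hy] using h0
        · simpa using hy
      · apply hroot (-z.re / z.im)
        field_simp
        linear_combination h0
    obtain ⟨u, rfl⟩ := hu
    exact ⟨_, u.mul_inv⟩

instance QN.fin {N : ℕ} [NeZero N] {m t : ℤ} : Finite (QN N m t) :=
  Finite.of_equiv _ (QuadraticAlgebra.equivProd _ _).symm

lemma QN.exists_rep {N : ℕ} {m t : ℤ} (z : QN N m t) :
    ∃ x y : ℤ, z = ⟨(x : ZMod N), (y : ZMod N)⟩ := by
  obtain ⟨x, y⟩ := z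
  obtain ⟨x, rfl⟩ := ZMod.intCast_surjective x
  obtain ⟨y, rfl⟩ := ZMod.intCast_surjective y
  exact ⟨x, y, rfl⟩

lemma zmod_unit_iff {l b : ℕ} (hl : l.Prime) (x : ℤ) :
    IsUnit (x : ZMod (l ^ (b + 1))) ↔ ¬ (l : ℤ) ∣ x := by
  rw [ZMod.coe_int_isUnit_iff_isCoprime]
  push_cast
  rw [IsCoprime.pow_left_iff (Nat.succ_pos b),
    Prime.coprime_iff_not_dvd (Nat.prime_iff_prime_int.1 hl)]

lemma zmod_pow_mul {l b : ℕ} (hl : l.Prime) (x : ℤ) :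
    (((l ^ b : ℕ) : ZMod (l ^ (b + 1))) * (x : ZMod (l ^ (b + 1))) = 0) ↔ (l : ℤ) ∣ x := by
  have h1 : (((l ^ b : ℕ) : ZMod (l ^ (b + 1))) * (x : ZMod (l ^ (b + 1)))) =
    (((l : ℤ) ^ b * x : ℤ) : ZMod (l ^ (b + 1))) := by push_cast; ring
  rw [h1, ZMod.intCast_zmod_eq_zero_iff_dvd]
  push_cast
  rw [pow_succ]
  exact mul_dvd_mul_iff_left (pow_ne_zero _ (by exact_mod_cast hl.ne_zero))

lemma QN.nsmul_self {N : ℕ} {m t : ℤ} (z : QN N m t) : N • z = 0 := by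
  ext <;> simp

lemma QN.addOrder {l b : ℕ} (hl : l.Prime) {m t : ℤ} (u v : ℤ) :
    addOrderOf (⟨(u : ZMod (l ^ (b + 1))), (v : ZMod (l ^ (b + 1)))⟩ : QN (l ^ (b + 1)) m t)
      = l ^ (b + 1) ↔ ¬ ((l : ℤ) ∣ u ∧ (l : ℤ) ∣ v) := by
  have := Fact.mk hl
  set P : QN (l ^ (b + 1)) m t := ⟨(u : ZMod (l ^ (b + 1))), (v : ZMod (l ^ (b + 1)))⟩ with hP
  have key : (l ^ b) • P = 0 ↔ ((l : ℤ) ∣ u ∧ (l : ℤ) ∣ v) := by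
    rw [← zmod_pow_mul (b := b) hl u, ← zmod_pow_mul (b := b) hl v, QuadraticAlgebra.ext_iff]
    simp [hP]
  rw [← key]
  constructor
  · intro h h0
    have h1 := addOrderOf_dvd_of_nsmul_eq_zero h0
    rw [h] at h1
    have h2 := Nat.le_of_dvd (pow_pos hl.pos b) h1
    have h3 : l ^ b < l ^ (b + 1) := Nat.pow_lt_pow_right hl.one_lt (Nat.lt_succ_self b)
    omega
  · intro h
    exact addOrderOf_eq_prime_pow h (QN.nsmul_self P)

lemma QN.unit_iff {l b : ℕ} (hl : l.Prime) {m t : ℤ} (u v : ℤ) :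
    IsUnit (⟨(u : ZMod (l ^ (b + 1))), (v : ZMod (l ^ (b + 1)))⟩ : QN (l ^ (b + 1)) m t)
      ↔ ¬ (l : ℤ) ∣ u ^ 2 + t * u * v - m * v ^ 2 := by
  rw [QuadraticAlgebra.isUnit_iff_norm_isUnit, ← zmod_unit_iff (b := b) hl,
    QuadraticAlgebra.norm_def]
  push_cast
  apply iff_of_eq
  congr 1
  ring

/-- scalar units acting on `P` -/
def scal {N : ℕ} {m t : ℤ} (P : QN N m t) (c : (ZMod N)ˣ) : MulAction.orbit (QN N m t)ˣ P :=
  ⟨(Units.map (algebraMap (ZMod N) (QN N m t)).toMonoidHom c) • P, ⟨_, rfl⟩⟩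

lemma scal_val {N : ℕ} {m t : ℤ} (P : QN N m t) (c : (ZMod N)ˣ) :
    (scal P c).1 = ⟨c.1 * P.re, c.1 * P.im⟩ := by
  ext <;> simp [scal, Units.smul_def]

lemma scal_inj {N : ℕ} {m t : ℤ} (P : QN N m t) (hP : addOrderOf P = N) :
    Function.Injective (scal P) := by
  intro c d h
  have h1 := congrArg Subtype.val h
  rw [scal_val, scal_val, QuadraticAlgebra.ext_iff] at h1
  obtain ⟨k, hk⟩ := ZMod.intCast_surjective (c.1 - d.1)
  have h2 : k • P = 0 := by
    ext
    · rw [QuadraticAlgebra.re_smul, zsmul_eq_mul, hk, QuadraticAlgebra.re_zero]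
      linear_combination h1.1
    · rw [QuadraticAlgebra.im_smul, zsmul_eq_mul, hk, QuadraticAlgebra.im_zero]
      linear_combination h1.2
  have h3 := addOrderOf_dvd_iff_zsmul_eq_zero.2 h2
  rw [hP, ← ZMod.intCast_zmod_eq_zero_iff_dvd, hk] at h3
  exact Units.ext (sub_eq_zero.1 h3)

lemma card_units_pp {l b : ℕ} (hl : l.Prime) :
    Nat.card (ZMod (l ^ (b + 1)))ˣ = l ^ b * (l - 1) := by
  have : NeZero (l ^ (b + 1)) := ⟨pow_ne_zero _ hl.ne_zero⟩
  rw [Nat.card_eq_fintype_card, ZMod.card_units_eq_totient,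
    Nat.totient_prime_pow_succ hl]

lemma least_of_root {l b : ℕ} (hl : l.Prime) {m t : ℤ} (r : ℤ)
    (hr : (l : ℤ) ^ (b + 1) ∣ r ^ 2 - t * r - m) :
    IsLeast (oS (QN (l ^ (b + 1)) m t) (l ^ (b + 1))) (l ^ b * (l - 1)) := by
  have : NeZero (l ^ (b + 1)) := ⟨pow_ne_zero _ hl.ne_zero⟩
  constructor
  · have hP : addOrderOf (⟨((-r : ℤ) : ZMod (l ^ (b + 1))), ((1 : ℤ) : ZMod (l ^ (b + 1)))⟩ :
        QN (l ^ (b + 1)) m t) = l ^ (b + 1) := by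
      rw [QN.addOrder hl]
      rintro ⟨-, h⟩
      have := Int.natAbs_dvd_natAbs.2 h
      simp at this
      exact hl.one_lt.ne' this
    refine ⟨_, hP, ?_⟩
    rw [← card_units_pp hl]
    symm
    apply Nat.card_congr
    refine Equiv.ofBijective (scal _) ⟨scal_inj _ hP, ?_⟩
    rintro ⟨_, ⟨w, rfl⟩⟩
    have hr' : ((r : ZMod (l ^ (b + 1))) ^ 2 - t * r - m) = 0 := by
      have h1 : ((l ^ (b + 1) : ℕ) : ℤ) ∣ r ^ 2 - t * r - m := by exact_mod_cast hr
      rw [← ZMod.intCast_zmod_eq_zero_iff_dvd] at h1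
      exact_mod_cast h1
    have hn := (QuadraticAlgebra.isUnit_iff_norm_isUnit).1 w.isUnit
    rw [QuadraticAlgebra.norm_def] at hn
    have hc : IsUnit (w.1.re + w.1.im * (t - r)) := by
      apply isUnit_of_mul_isUnit_right (x := w.1.re + w.1.im * r)
      convert hn using 1
      linear_combination (- w.1.im ^ 2) * hr'
    refine ⟨hc.unit, ?_⟩
    apply Subtype.ext
    rw [scal_val]
    simp only [IsUnit.unit_spec]
    ext
    · simp [Units.smul_def]; linear_combination (w.1.im) * hr'
    · simp [Units.smul_def]; ring
  · rintro c ⟨P, hP, rfl⟩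
    rw [← card_units_pp hl]
    exact Nat.card_le_card_of_injective _ (scal_inj P hP)

lemma card_units_subtype (A : Type*) [Monoid A] : Nat.card Aˣ = Nat.card {z : A // IsUnit z} :=
  Nat.card_congr (Equiv.ofBijective (fun u : Aˣ => (⟨u.1, u.isUnit⟩ : {z : A // IsUnit z}))
    ⟨fun _ _ h => Units.ext (congrArg Subtype.val h), fun ⟨_, hz⟩ => ⟨hz.unit, rfl⟩⟩)

lemma ram_unit_iff {l b : ℕ} (hl : l.Prime) {m t s : ℤ} (h1 : (l : ℤ) ∣ t - 2 * s)
    (h2 : (l : ℤ) ∣ m + s ^ 2) (z : QN (l ^ (b + 1)) m t) :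
    IsUnit z ↔ IsUnit (z.re + s * z.im) := by
  obtain ⟨x, y, rfl⟩ := QN.exists_rep z
  rw [QN.unit_iff hl]
  have : ((x : ZMod (l ^ (b + 1))) + s * y) = ((x + s * y : ℤ) : ZMod (l ^ (b + 1))) := by
    push_cast; ring
  simp only
  rw [this, zmod_unit_iff hl, not_iff_not]
  have e : x ^ 2 + t * x * y - m * y ^ 2 =
    ((t - 2 * s) * (x * y) - (m + s ^ 2) * y ^ 2) + (x + s * y) ^ 2 := by ring
  rw [e, dvd_add_right (dvd_sub (h1.mul_right _) (h2.mul_right _))]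
  exact (Nat.prime_iff_prime_int.1 hl).dvd_pow_iff_dvd (by norm_num)

lemma ram_card_units {l b : ℕ} (hl : l.Prime) {m t s : ℤ} (h1 : (l : ℤ) ∣ t - 2 * s)
    (h2 : (l : ℤ) ∣ m + s ^ 2) :
    Nat.card (QN (l ^ (b + 1)) m t)ˣ = (l ^ b * (l - 1)) * l ^ (b + 1) := by
  have hE : Nat.card {z : QN (l ^ (b + 1)) m t // IsUnit z} =
      Nat.card ({x : ZMod (l ^ (b + 1)) // IsUnit x} × ZMod (l ^ (b + 1))) := by
    apply Nat.card_congr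
    refine ⟨fun z => (⟨z.1.re + s * z.1.im, (ram_unit_iff hl h1 h2 z.1).1 z.2⟩, z.1.im),
      fun p => ⟨⟨p.1.1 - s * p.2, p.2⟩, (ram_unit_iff hl h1 h2 _).2 (by simpa using p.1.2)⟩, ?_, ?_⟩
    · intro z
      apply Subtype.ext
      ext <;> simp
    · rintro ⟨⟨x, hx⟩, y⟩
      simp
  rw [card_units_subtype, hE, Nat.card_prod, ← card_units_subtype, card_units_pp hl, Nat.card_zmod]

lemma ram_orbit {l b : ℕ} (hl : l.Prime) {m t s : ℤ} (h1 : (l : ℤ) ∣ t - 2 * s)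
    (h2 : (l : ℤ) ∣ m + s ^ 2) (P : QN (l ^ (b + 1)) m t) (hP : P ≠ 0) :
    Nat.card (MulAction.orbit (QN (l ^ (b + 1)) m t)ˣ P) *
      Nat.card {z : QN (l ^ (b + 1)) m t // z * P = 0} = (l ^ b * (l - 1)) * l ^ (b + 1) := by
  have : NeZero (l ^ (b + 1)) := ⟨pow_ne_zero _ hl.ne_zero⟩
  have hstab : Nat.card {z : QN (l ^ (b + 1)) m t // z * P = 0} =
      Nat.card (MulAction.stabilizer (QN (l ^ (b + 1)) m t)ˣ P) := by
    symm
    apply Nat.card_congr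
    refine Equiv.ofBijective (fun u => ⟨u.1.1 - 1, ?_⟩) ⟨?_, ?_⟩
    · have : u.1.1 * P = P := u.2
      rw [sub_mul, this, one_mul, sub_self]
    · intro u v h
      have := congrArg Subtype.val h
      simp only [sub_left_inj] at this
      exact Subtype.ext (Units.ext this)
    · rintro ⟨z, hz⟩
      have hu : IsUnit (1 + z) := by
        by_contra hn
        have hnz : ¬ IsUnit z := by
          intro hu
          exact hP ((IsUnit.mul_right_eq_zero hu).1 hz)
        obtain ⟨x, y, rfl⟩ := QN.exists_rep z
        rw [ram_unit_iff hl h1 h2] at hn hnz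
        have e1 : ((x : ZMod (l ^ (b + 1))) + s * y) = ((x + s * y : ℤ) : ZMod (l ^ (b + 1))) := by
          push_cast; ring
        have e2 : ((1 + (⟨x, y⟩ : QN (l ^ (b + 1)) m t)).re +
            s * (1 + (⟨x, y⟩ : QN (l ^ (b + 1)) m t)).im)
             = ((1 + (x + s * y) : ℤ) : ZMod (l ^ (b + 1))) := by
          simp [QuadraticAlgebra.re_one, QuadraticAlgebra.im_one]; ring
        rw [e2, zmod_unit_iff hl, not_not] at hn
        simp only at hnz
        rw [e1, zmod_unit_iff hl, not_not] at hnz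
        have h3 := (dvd_add_left hnz).1 hn
        have := Int.natAbs_dvd_natAbs.2 h3
        simp at this
        exact hl.one_lt.ne' this
      refine ⟨⟨hu.unit, ?_⟩, ?_⟩
      · change (1 + z) * P = P
        rw [add_mul, hz, one_mul, add_zero]
      · apply Subtype.ext
        simp
  rw [hstab, ← ram_card_units hl h1 h2]
  have e := Nat.card_congr (MulAction.orbitProdStabilizerEquivGroup (QN (l ^ (b + 1)) m t)ˣ P)
  rw [Nat.card_prod] at e
  exact e

lemma card_tors_le {l b M : ℕ} (hl : l.Prime) {n : ℤ} (hn : ¬ (l : ℤ) ^ (M + 1) ∣ n) :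
    Nat.card {y : ZMod (l ^ (b + 1)) // y * n = 0} ≤ l ^ M := by
  have : NeZero (l ^ (b + 1)) := ⟨pow_ne_zero _ hl.ne_zero⟩
  have h := IsAddCyclic.card_nsmul_eq_zero_le (α := ZMod (l ^ (b + 1))) (n := l ^ M)
    (pow_pos hl.pos M)
  refine le_trans ?_ h
  rw [← Fintype.card_subtype, ← Nat.card_eq_fintype_card]
  refine Nat.card_le_card_of_injective (fun y => ⟨y.1, ?_⟩) ?_
  · obtain ⟨y, hy⟩ := y
    obtain ⟨y, rfl⟩ := ZMod.intCast_surjective y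
    have h1 : ((l ^ (b + 1) : ℕ) : ℤ) ∣ y * n := by
      rw [← ZMod.intCast_zmod_eq_zero_iff_dvd]; exact_mod_cast hy
    have h2 : ((l ^ (b + 1) : ℕ) : ℤ) ∣ (l : ℤ) ^ M * y := by
      push_cast at h1 ⊢
      have hp := Nat.prime_iff_prime_int.1 hl
      by_cases hM : b + 1 ≤ M
      · exact (pow_dvd_pow _ hM).mul_right _
      · obtain ⟨c, hc⟩ : ∃ c, b + 1 = M + c := ⟨b + 1 - M, by omega⟩
        rw [hc] at h1 ⊢
        rw [pow_add]
        apply mul_dvd_mul_left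
        obtain ⟨d, rfl⟩ : ∃ d, c = d + 1 := ⟨c - 1, by omega⟩
        have h4 : (l : ℤ) ^ (d + 1) ∣ y ∨ (l : ℤ) ^ (M + 1) ∣ n := by
          by_cases hy0 : (l : ℤ) ^ (d + 1) ∣ y
          · exact Or.inl hy0
          right
          by_contra hn0
          have f1 := emultiplicity_lt_iff_not_dvd.2 hy0
          have f2 := emultiplicity_lt_iff_not_dvd.2 hn0
          have f3 := le_emultiplicity_of_pow_dvd h1
          rw [emultiplicity_mul hp] at f3
          have g1 := (Order.lt_add_one_iff_of_not_isMax (by simp)).1 (show _ < ((d : ℕ∞) + 1) by exact_mod_cast f1)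
          have g2 := (Order.lt_add_one_iff_of_not_isMax (by simp)).1 (show _ < ((M : ℕ∞) + 1) by exact_mod_cast f2)
          have g3 := f3.trans (add_le_add g1 g2)
          have g4 : M + (d + 1) ≤ d + M := by exact_mod_cast g3
          omega
        rcases h4 with h4 | h4
        · exact h4
        · exact absurd h4 hn
    rw [← ZMod.intCast_zmod_eq_zero_iff_dvd] at h2
    simpa using h2
  · intro y z h
    exact Subtype.ext (Subtype.mk.inj h)

lemma card_ann_le {l b M : ℕ} (hl : l.Prime) {m t u v : ℤ} (hp : ¬ ((l : ℤ) ∣ u ∧ (l : ℤ) ∣ v))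
    (hn : ¬ (l : ℤ) ^ (M + 1) ∣ u ^ 2 + t * u * v - m * v ^ 2) :
    Nat.card {z : QN (l ^ (b + 1)) m t // z * ⟨(u : ZMod (l ^ (b + 1))), v⟩ = 0} ≤ l ^ M := by
  have : NeZero (l ^ (b + 1)) := ⟨pow_ne_zero _ hl.ne_zero⟩
  have hpp := Nat.prime_iff_prime_int.1 hl
  refine le_trans ?_ (card_tors_le (b := b) hl hn)
  have hw : ∀ z : QN (l ^ (b + 1)) m t, z * ⟨(u : ZMod (l ^ (b + 1))), v⟩ = 0 →
      z.re * ((u ^ 2 + t * u * v - m * v ^ 2 : ℤ) : ZMod (l ^ (b + 1))) = 0 ∧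
      z.im * ((u ^ 2 + t * u * v - m * v ^ 2 : ℤ) : ZMod (l ^ (b + 1))) = 0 ∧
      z.re * v + z.im * (u + t * v) = 0 := by
    intro z hz
    have h1 := congrArg QuadraticAlgebra.re hz
    have h2 := congrArg QuadraticAlgebra.im hz
    simp at h1 h2
    push_cast
    refine ⟨?_, ?_, ?_⟩
    · linear_combination (u + t * v : ZMod (l ^ (b + 1))) * h1 - (m * v : ZMod (l ^ (b + 1))) * h2
    · linear_combination (u : ZMod (l ^ (b + 1))) * h2 - (v : ZMod (l ^ (b + 1))) * h1
    · linear_combination h2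
  refine Nat.card_le_card_of_injective (fun z => ⟨z.1.im, (hw z.1 z.2).2.1⟩) ?_
  rintro ⟨z, hz⟩ ⟨w, hw'⟩ h
  have him : z.im = w.im := congrArg Subtype.val h
  apply Subtype.ext
  refine QuadraticAlgebra.ext ?_ him
  change z.re = w.re
  obtain ⟨z1, z2, z3⟩ := hw z hz
  obtain ⟨w1, w2, w3⟩ := hw w hw'
  by_cases hv : (l : ℤ) ∣ v
  · have hu : ¬ (l : ℤ) ∣ u := fun h => hp ⟨h, hv⟩
    have hN : ¬ (l : ℤ) ∣ u ^ 2 + t * u * v - m * v ^ 2 := by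
      intro hd
      apply hu
      apply hpp.dvd_of_dvd_pow (n := 2)
      have e : u ^ 2 = (u ^ 2 + t * u * v - m * v ^ 2) - (t * u - m * v) * v := by ring
      rw [e]
      exact dvd_sub hd (hv.mul_left _)
    have hU := (zmod_unit_iff (b := b) hl _).2 hN
    rw [(IsUnit.mul_left_eq_zero hU).1 z1, (IsUnit.mul_left_eq_zero hU).1 w1]
  · have hU := (zmod_unit_iff (b := b) hl _).2 hv
    apply hU.mul_right_cancel
    rw [him] at z3
    linear_combination z3 - w3

lemma card_ann_ge {l b M : ℕ} (hl : l.Prime) {m t r : ℤ} (hM : M ≤ b + 1)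
    (hr : (l : ℤ) ^ M ∣ r ^ 2 - t * r - m) :
    l ^ M ≤ Nat.card {z : QN (l ^ (b + 1)) m t // z * ⟨((-r : ℤ) : ZMod (l ^ (b + 1))), ((1 : ℤ) : ZMod (l ^ (b + 1)))⟩ = 0} := by
  have : NeZero (l ^ (b + 1)) := ⟨pow_ne_zero _ hl.ne_zero⟩
  obtain ⟨c, hc⟩ : ∃ c, b + 1 = c + M := ⟨b + 1 - M, by omega⟩
  have e : Nat.card (Fin (l ^ M)) = l ^ M := by simp
  rw [← e]
  have h0 : ((l ^ c : ℕ) : ZMod (l ^ (b + 1))) * ((r : ZMod (l ^ (b + 1))) ^ 2 - t * r - m) = 0 := by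
    have : ((l ^ (b + 1) : ℕ) : ℤ) ∣ (l ^ c : ℕ) * (r ^ 2 - t * r - m) := by
      rw [hc]
      push_cast
      rw [pow_add]
      exact mul_dvd_mul_left _ hr
    rw [← ZMod.intCast_zmod_eq_zero_iff_dvd] at this
    exact_mod_cast this
  refine Nat.card_le_card_of_injective (fun i => ⟨⟨((l ^ c * i.1 : ℕ) : ZMod (l ^ (b + 1))) * (t - r),
    - ((l ^ c * i.1 : ℕ) : ZMod (l ^ (b + 1)))⟩, ?_⟩) ?_
  · push_cast at h0 ⊢
    ext
    · simp; linear_combination (i.1 : ZMod (l ^ (b + 1))) * h0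
    · simp; ring
  · intro i j h
    have h1 := congrArg (fun x => x.1.im) h
    simp only [neg_inj] at h1
    rw [ZMod.natCast_eq_natCast_iff, hc, pow_add] at h1
    have h2 := Nat.ModEq.mul_left_cancel' (pow_ne_zero c hl.ne_zero) h1
    exact Fin.ext (Nat.ModEq.eq_of_lt_of_lt h2 i.2 j.2)

lemma least_ram {l b M : ℕ} (hl : l.Prime) {m t s r : ℤ} (h1 : (l : ℤ) ∣ t - 2 * s)
    (h2 : (l : ℤ) ∣ m + s ^ 2) (hM : M ≤ b + 1) (hr : (l : ℤ) ^ M ∣ r ^ 2 - t * r - m)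
    (hn : ∀ u v : ℤ, (l : ℤ) ^ (M + 1) ∣ u ^ 2 + t * u * v - m * v ^ 2 → (l : ℤ) ∣ u ∧ (l : ℤ) ∣ v) :
    IsLeast (oS (QN (l ^ (b + 1)) m t) (l ^ (b + 1))) (l ^ (2 * (b + 1) - 1 - M) * (l - 1)) := by
  have : NeZero (l ^ (b + 1)) := ⟨pow_ne_zero _ hl.ne_zero⟩
  have hpow : (l ^ b * (l - 1)) * l ^ (b + 1) = (l ^ (2 * (b + 1) - 1 - M) * (l - 1)) * l ^ M := by
    have : l ^ (2 * (b + 1) - 1 - M) * l ^ M = l ^ b * l ^ (b + 1) := by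
      rw [← pow_add, ← pow_add]; congr 1; omega
    calc _ = (l ^ b * l ^ (b + 1)) * (l - 1) := by ring
      _ = _ := by rw [← this]; ring
  have hne : ∀ P : QN (l ^ (b + 1)) m t, addOrderOf P = l ^ (b + 1) → P ≠ 0 := by
    rintro P hP rfl
    rw [addOrderOf_zero] at hP
    exact (Nat.one_lt_pow (Nat.succ_ne_zero b) hl.one_lt).ne hP
  constructor
  · have hpr : ¬ ((l : ℤ) ∣ -r ∧ (l : ℤ) ∣ 1) := by
      rintro ⟨-, h⟩
      have := Int.natAbs_dvd_natAbs.2 h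
      simp at this
      exact hl.one_lt.ne' this
    have hP := (QN.addOrder (b := b) (m := m) (t := t) hl (-r) 1).2 hpr
    refine ⟨_, hP, ?_⟩
    have ho := ram_orbit hl h1 h2 _ (hne _ hP)
    have ha1 := card_ann_ge (b := b) hl hM hr
    have ha2 := card_ann_le (b := b) (M := M) (m := m) (t := t) hl hpr (fun h => hpr (hn _ _ h))
    rw [le_antisymm ha2 ha1, hpow] at ho
    exact Nat.eq_of_mul_eq_mul_right (pow_pos hl.pos M) ho
  · rintro c ⟨P, hP, rfl⟩
    have ho := ram_orbit hl h1 h2 _ (hne _ hP)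
    obtain ⟨u, v, rfl⟩ := QN.exists_rep P
    have hpr := (QN.addOrder hl u v).1 hP
    have ha2 := card_ann_le (b := b) (M := M) (m := m) (t := t) hl hpr (fun h => hpr (hn _ _ h))
    rw [hpow] at ho
    have := Nat.mul_le_mul_left (Nat.card (MulAction.orbit (QN (l ^ (b + 1)) m t)ˣ
      (⟨(u : ZMod (l ^ (b + 1))), (v : ZMod (l ^ (b + 1)))⟩ : QN (l ^ (b + 1)) m t))) ha2
    rw [ho] at this
    exact Nat.le_of_mul_le_mul_right this (pow_pos hl.pos M)

lemma norm_prim {l : ℕ} (hl : l.Prime) {m t : ℤ} (hr : ∀ r : ℤ, ¬ (l : ℤ) ∣ r ^ 2 - t * r - m)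
    (u v : ℤ) (h : (l : ℤ) ∣ u ^ 2 + t * u * v - m * v ^ 2) : (l : ℤ) ∣ u ∧ (l : ℤ) ∣ v := by
  have := Fact.mk hl
  by_cases hv : (l : ℤ) ∣ v
  · refine ⟨?_, hv⟩
    apply (Nat.prime_iff_prime_int.1 hl).dvd_of_dvd_pow (n := 2)
    have e : u ^ 2 = (u ^ 2 + t * u * v - m * v ^ 2) - (t * u - m * v) * v := by ring
    rw [e]
    exact dvd_sub h (hv.mul_left _)
  · exfalso
    obtain ⟨r, hr'⟩ := ZMod.intCast_surjective (-(u : ZMod l) / (v : ZMod l))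
    apply hr r
    rw [← ZMod.intCast_zmod_eq_zero_iff_dvd] at h hv ⊢
    push_cast at h ⊢
    rw [hr']
    field_simp
    linear_combination h

lemma inert_card {l b : ℕ} (hl : l.Prime) {m t : ℤ}
    (hr : ∀ r : ℤ, ¬ (l : ℤ) ∣ r ^ 2 - t * r - m) :
    Nat.card (QN (l ^ (b + 1)) m t)ˣ = l ^ (2 * b) * (l ^ 2 - 1) := by
  classical
  have : NeZero (l ^ (b + 1)) := ⟨pow_ne_zero _ hl.ne_zero⟩
  have hc : ∀ (A : Type _) [Monoid A] [Finite A],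
      Nat.card Aˣ + Nat.card {z : A // ¬ IsUnit z} = Nat.card A := by
    intro A _ _
    rw [card_units_subtype, ← Nat.card_sum]
    exact Nat.card_congr (Equiv.sumCompl _)
  have h1 := hc (QN (l ^ (b + 1)) m t)
  have h2 := hc (ZMod (l ^ (b + 1)))
  have hE : Nat.card {z : QN (l ^ (b + 1)) m t // ¬ IsUnit z} =
      Nat.card ({z : ZMod (l ^ (b + 1)) // ¬ IsUnit z} × {z : ZMod (l ^ (b + 1)) // ¬ IsUnit z}) := by
    have hiff : ∀ z : QN (l ^ (b + 1)) m t, ¬ IsUnit z ↔ ¬ IsUnit z.re ∧ ¬ IsUnit z.im := by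
      intro z
      obtain ⟨x, y, rfl⟩ := QN.exists_rep z
      simp only
      rw [QN.unit_iff hl, zmod_unit_iff hl, zmod_unit_iff hl, not_not, not_not, not_not]
      refine ⟨norm_prim hl hr x y, ?_⟩
      rintro ⟨⟨x, rfl⟩, ⟨y, rfl⟩⟩
      exact ⟨l * (x ^ 2 + t * x * y - m * y ^ 2), by ring⟩
    apply Nat.card_congr
    refine ⟨fun z => (⟨z.1.re, ((hiff z.1).1 z.2).1⟩, ⟨z.1.im, ((hiff z.1).1 z.2).2⟩),
      fun p => ⟨⟨p.1.1, p.2.1⟩, (hiff _).2 ⟨p.1.2, p.2.2⟩⟩, ?_, ?_⟩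
    · intro z; rfl
    · intro z; rfl
  have h3 : Nat.card (QN (l ^ (b + 1)) m t) = l ^ (b + 1) * l ^ (b + 1) := by
    rw [Nat.card_congr (QuadraticAlgebra.equivProd _ _), Nat.card_prod, Nat.card_zmod]
  rw [hE, Nat.card_prod, h3] at h1
  rw [card_units_pp hl, Nat.card_zmod] at h2
  have h4 : Nat.card {z : ZMod (l ^ (b + 1)) // ¬ IsUnit z} = l ^ b := by
    obtain ⟨k, hk⟩ : ∃ k, l = k + 1 := ⟨l - 1, by have := hl.pos; omega⟩
    have : l ^ (b + 1) = l ^ b * (l - 1) + l ^ b := by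
      rw [pow_succ, hk]; simp; ring
    omega
  rw [h4] at h1
  obtain ⟨k, hk⟩ : ∃ k, l ^ 2 = k + 1 := ⟨l ^ 2 - 1, by have := pow_pos hl.pos 2; omega⟩
  have : l ^ (b + 1) * l ^ (b + 1) = l ^ (2 * b) * (l ^ 2 - 1) + l ^ b * l ^ b := by
    have : l ^ (b + 1) * l ^ (b + 1) = l ^ (2 * b) * l ^ 2 := by ring
    rw [this, hk]; simp; ring
  omega

lemma least_inert {l b : ℕ} (hl : l.Prime) {m t : ℤ}
    (hr : ∀ r : ℤ, ¬ (l : ℤ) ∣ r ^ 2 - t * r - m) :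
    IsLeast (oS (QN (l ^ (b + 1)) m t) (l ^ (b + 1))) (l ^ (2 * b) * (l ^ 2 - 1)) := by
  have : NeZero (l ^ (b + 1)) := ⟨pow_ne_zero _ hl.ne_zero⟩
  have key : ∀ P : QN (l ^ (b + 1)) m t, addOrderOf P = l ^ (b + 1) →
      Nat.card (MulAction.orbit (QN (l ^ (b + 1)) m t)ˣ P) = l ^ (2 * b) * (l ^ 2 - 1) := by
    intro P hP
    have hu : IsUnit P := by
      obtain ⟨u, v, rfl⟩ := QN.exists_rep P
      rw [QN.unit_iff hl]
      exact fun h => (QN.addOrder hl u v).1 hP (norm_prim hl hr u v h)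
    rw [← inert_card hl hr]
    symm
    apply Nat.card_congr
    refine Equiv.ofBijective (fun u => ⟨u • P, u, rfl⟩) ⟨?_, ?_⟩
    · intro u v h
      exact Units.ext (hu.mul_right_cancel (congrArg Subtype.val h))
    · rintro ⟨_, u, rfl⟩
      exact ⟨u, rfl⟩
  constructor
  · have hP := (QN.addOrder (b := b) (m := m) (t := t) hl 0 1).2 (by
      rintro ⟨-, h⟩
      have := Int.natAbs_dvd_natAbs.2 h
      simp at this
      exact hl.one_lt.ne' this)
    exact ⟨_, hP, key _ hP⟩
  · rintro c ⟨P, hP, rfl⟩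
    exact (key P hP).ge

lemma hensel_quad {l : ℕ} (hl : l.Prime) {m t : ℤ} (r : ℤ) (h1 : (l : ℤ) ∣ r ^ 2 - t * r - m)
    (h2 : ¬ (l : ℤ) ∣ 2 * r - t) (b : ℕ) :
    ∃ r' : ℤ, (l : ℤ) ^ (b + 1) ∣ r' ^ 2 - t * r' - m ∧ ¬ (l : ℤ) ∣ 2 * r' - t := by
  induction b with
  | zero => exact ⟨r, by simpa using h1, h2⟩
  | succ b ih =>
    obtain ⟨r, ⟨c, hc⟩, hd⟩ := ih
    obtain ⟨x, y, hxy⟩ := ((Nat.prime_iff_prime_int.1 hl).coprime_iff_not_dvd).2 hd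
    refine ⟨r - l ^ (b + 1) * (c * y), ⟨c * x + l ^ b * (c * y) ^ 2, ?_⟩, ?_⟩
    · linear_combination hc - (l : ℤ) ^ (b + 1) * c * hxy
    · intro h
      apply hd
      have e : 2 * r - t = (2 * (r - l ^ (b + 1) * (c * y)) - t) + l * (2 * l ^ b * (c * y)) := by ring
      rw [e]
      exact dvd_add h (dvd_mul_right _ _)

lemma descent {l : ℕ} (hl : l.Prime) {m t : ℤ} (e : ℕ) (h : ∀ u v : ℤ,
    (l : ℤ) ^ (e + 1) ∣ u ^ 2 + t * u * v - m * v ^ 2 → (l : ℤ) ∣ u ∧ (l : ℤ) ∣ v) (j : ℕ) :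
    ∀ u v : ℤ, (l : ℤ) ^ (2 * j + e + 1) ∣ u ^ 2 + t * u * v - m * v ^ 2 →
      (l : ℤ) ^ (j + 1) ∣ u ∧ (l : ℤ) ^ (j + 1) ∣ v := by
  induction j with
  | zero => intro u v; simpa using h u v
  | succ j ih =>
    intro u v huv
    obtain ⟨⟨x, rfl⟩, ⟨y, rfl⟩⟩ := h u v ((pow_dvd_pow _ (by omega)).trans huv)
    have e1 : (l : ℤ) ^ (2 * (j + 1) + e + 1) = l ^ 2 * l ^ (2 * j + e + 1) := by ring
    have e2 : (l * x) ^ 2 + t * (l * x) * (l * y) - m * (l * y) ^ 2 =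
      (l : ℤ) ^ 2 * (x ^ 2 + t * x * y - m * y ^ 2) := by ring
    rw [e1, e2, mul_dvd_mul_iff_left (pow_ne_zero _ (by exact_mod_cast hl.ne_zero))] at huv
    obtain ⟨hx, hy⟩ := ih x y huv
    rw [pow_succ' _ (j + 1)]
    exact ⟨mul_dvd_mul_left _ hx, mul_dvd_mul_left _ hy⟩

lemma exists_QB (K : Type*) [Field K] [NumberField K] (hK : Module.finrank ℚ K = 2) :
    ∃ (w : 𝓞 K) (m t : ℤ), QB (𝓞 K) w m t := by
  have hr : Module.finrank ℤ (𝓞 K) = 2 := by rw [RingOfIntegers.rank, hK]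
  let B := Module.finBasisOfFinrankEq ℤ (𝓞 K) hr
  have hrep : ∀ z : 𝓞 K, z = (B.repr z 0 : 𝓞 K) * B 0 + (B.repr z 1 : 𝓞 K) * B 1 := by
    intro z
    conv_lhs => rw [← B.sum_repr z]
    simp [Fin.sum_univ_two]
  have hind : ∀ x y : ℤ, (x : 𝓞 K) * B 0 + (y : 𝓞 K) * B 1 = 0 → x = 0 ∧ y = 0 := by
    intro x y h
    have h1 := Fintype.linearIndependent_iff.1 B.linearIndependent ![x, y]
      (by simpa [Fin.sum_univ_two] using h)
    exact ⟨by simpa using h1 0, by simpa using h1 1⟩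
  set c := B.repr 1 0 with hc
  set d := B.repr 1 1 with hd
  have h1 : (1 : 𝓞 K) = (c : 𝓞 K) * B 0 + (d : 𝓞 K) * B 1 := hrep 1
  have hcop : IsCoprime c d := by
    rw [Int.isCoprime_iff_gcd_eq_one]
    obtain ⟨c', hc'⟩ := Int.gcd_dvd_left c d
    obtain ⟨d', hd'⟩ := Int.gcd_dvd_right c d
    set g := Int.gcd c d with hg
    have hgz : (g : 𝓞 K) * ((c' : 𝓞 K) * B 0 + (d' : 𝓞 K) * B 1) = 1 := by
      rw [h1, hc', hd']; push_cast; ring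
    obtain ⟨h0⟩ : Nonempty (IsUnit (g : 𝓞 K)) := ⟨IsUnit.of_mul_eq_one _ hgz⟩
    -- expand the witness times `g`
    set z := ((c' : 𝓞 K) * B 0 + (d' : 𝓞 K) * B 1) with hz
    have hgK : (algebraMap (𝓞 K) K z) = (g : K)⁻¹ := by
      have := congrArg (algebraMap (𝓞 K) K) hgz
      simp only [map_mul, map_natCast, map_one] at this
      exact eq_inv_of_mul_eq_one_right this
    have hint : IsIntegral ℤ (algebraMap ℚ K ((g : ℚ)⁻¹)) := by
      have h2 : algebraMap ℚ K ((g : ℚ)⁻¹) = (g : K)⁻¹ := by simp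
      rw [h2, ← hgK]
      exact z.isIntegral_coe
    have hint2 : IsIntegral ℤ ((g : ℚ)⁻¹) :=
      (isIntegral_algebraMap_iff (algebraMap ℚ K).injective).1 hint
    obtain ⟨k, hk⟩ := IsIntegrallyClosed.isIntegral_iff.1 hint2
    simp only [algebraMap_int_eq, eq_intCast] at hk
    have hg0 : (g : ℚ) ≠ 0 := by
      intro h
      have : g = 0 := by exact_mod_cast h
      rw [this] at hgz
      simp at hgz
    have : (g : ℤ) * k = 1 := by
      have : (g : ℚ) * k = 1 := by rw [hk]; exact mul_inv_cancel₀ hg0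
      exact_mod_cast this
    have := Int.isUnit_iff.1 (IsUnit.of_mul_eq_one _ this)
    omega
  obtain ⟨p, q, hpq⟩ := hcop
  have hpq' : (p : 𝓞 K) * c + q * d = 1 := by exact_mod_cast congrArg (Int.cast : ℤ → 𝓞 K) hpq
  set w : 𝓞 K := - (q : 𝓞 K) * B 0 + (p : 𝓞 K) * B 1 with hw
  have hspan : ∀ z : 𝓞 K, ∃ x y : ℤ, z = (x : 𝓞 K) + (y : 𝓞 K) * w := by
    intro z
    refine ⟨B.repr z 0 * p + B.repr z 1 * q, - B.repr z 0 * d + B.repr z 1 * c, ?_⟩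
    conv_lhs => rw [hrep z]
    rw [hw]
    push_cast
    generalize ((B.repr z 0 : ℤ) : 𝓞 K) = X
    generalize ((B.repr z 1 : ℤ) : 𝓞 K) = Y
    linear_combination (-(X * B 0 + Y * B 1)) * hpq' - (X * p + Y * q) * h1
  obtain ⟨m, t, hmt⟩ := hspan (w * w)
  refine ⟨w, m, t, hmt, hspan, ?_⟩
  intro x y hxy
  have h2 : ((x * c - y * q : ℤ) : 𝓞 K) * B 0 + ((x * d + y * p : ℤ) : 𝓞 K) * B 1 = 0 := by
    rw [hw] at hxy
    push_cast
    linear_combination hxy - (x : 𝓞 K) * h1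
  obtain ⟨e1, e2⟩ := hind _ _ h2
  constructor
  · linear_combination p * e1 + q * e2 - x * hpq
  · linear_combination -d * e1 + c * e2 - y * hpq

lemma max_order {K : Type*} [Field K] [NumberField K] {w : 𝓞 K} {m t : ℤ} (h : QB (𝓞 K) w m t)
    {l : ℕ} (hl : l.Prime) {s : ℤ} (h1 : (l : ℤ) ∣ t - 2 * s) (h2 : (l : ℤ) ∣ m + s ^ 2)
    (u v : ℤ) (huv : (l : ℤ) ^ (1 + 1) ∣ u ^ 2 + t * u * v - m * v ^ 2) :
    (l : ℤ) ∣ u ∧ (l : ℤ) ∣ v := by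
  have hsv : (l : ℤ) ∣ u + s * v := by
    apply (Nat.prime_iff_prime_int.1 hl).dvd_of_dvd_pow (n := 2)
    have e : (u + s * v) ^ 2 = (u ^ 2 + t * u * v - m * v ^ 2) -
      ((t - 2 * s) * (u * v) - (m + s ^ 2) * v ^ 2) := by ring
    rw [e]
    exact dvd_sub ((dvd_pow_self _ (by norm_num)).trans huv)
      (dvd_sub (h1.mul_right _) (h2.mul_right _))
  have hT : (l : ℤ) ∣ 2 * u + t * v := by
    have e : 2 * u + t * v = (u + s * v) * 2 + (t - 2 * s) * v := by ring
    rw [e]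
    exact dvd_add (hsv.mul_right _) (h1.mul_right _)
  obtain ⟨N', hN⟩ := huv
  obtain ⟨T', hT⟩ := hT
  have hl0 : (l : K) ≠ 0 := by exact_mod_cast hl.ne_zero
  set W : K := algebraMap (𝓞 K) K w with hW
  have hWW : W * W = (m : K) + t * W := by
    have := congrArg (algebraMap (𝓞 K) K) h.sq
    simpa using this
  have hNK : (u : K) ^ 2 + t * u * v - m * v ^ 2 = (l : K) ^ 2 * N' := by exact_mod_cast congrArg (Int.cast : ℤ → K) hN
  have hTK : (2 : K) * u + t * v = l * T' := by exact_mod_cast congrArg (Int.cast : ℤ → K) hT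
  have hint : IsIntegral ℤ (((u : K) + v * W) / l) := by
    refine ⟨Polynomial.X ^ 2 - Polynomial.C T' * Polynomial.X + Polynomial.C N', ?_, ?_⟩
    · monicity!
    · simp only [Polynomial.eval₂_add, Polynomial.eval₂_sub, Polynomial.eval₂_mul,
        Polynomial.eval₂_C, Polynomial.eval₂_X, Polynomial.eval₂_pow]
      simp only [algebraMap_int_eq, eq_intCast]
      field_simp
      linear_combination (v : K) ^ 2 * hWW - hNK + ((u : K) + v * W) * hTK
  obtain ⟨b, hb⟩ : ∃ b : 𝓞 K, algebraMap (𝓞 K) K b = ((u : K) + v * W) / l := ⟨⟨_, hint⟩, rfl⟩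
  obtain ⟨x, y, hxy⟩ := h.span b
  have hfin : ((u - l * x : ℤ) : 𝓞 K) + ((v - l * y : ℤ) : 𝓞 K) * w = 0 := by
    apply FaithfulSMul.algebraMap_injective (𝓞 K) K
    rw [hxy] at hb
    simp only [map_add, map_mul, map_intCast, map_zero] at hb ⊢
    rw [eq_div_iff hl0, ← hW] at hb
    rw [← hW]
    push_cast
    linear_combination -hb
  obtain ⟨e1, e2⟩ := h.ind _ _ hfin
  exact ⟨⟨x, by linarith⟩, ⟨y, by linarith⟩⟩

lemma order_QB {K : Type*} [Field K] [NumberField K] {w : 𝓞 K} {m t : ℤ} (h : QB (𝓞 K) w m t)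
    {f : ℕ} (hf : 0 < f) {O : Subalgebra ℤ K} (hO : IsOrderOfConductor K f O) :
    ∃ τ : O, QB O τ (f ^ 2 * m) (f * t) := by
  have hf0 : (f : K) ≠ 0 := by exact_mod_cast hf.ne'
  have hWW : algebraMap (𝓞 K) K w * algebraMap (𝓞 K) K w
      = (m : K) + t * algebraMap (𝓞 K) K w := by
    have := congrArg (algebraMap (𝓞 K) K) h.sq
    simpa using this
  refine ⟨⟨(f : K) * algebraMap (𝓞 K) K w, (hO _).2 ⟨0, w, by simp⟩⟩, ?_, ?_, ?_⟩
  · apply Subtype.ext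
    push_cast
    linear_combination (f : K) ^ 2 * hWW
  · rintro ⟨z, hz⟩
    obtain ⟨a, y, rfl⟩ := (hO z).1 hz
    obtain ⟨c, d, rfl⟩ := h.span y
    refine ⟨a + f * c, d, ?_⟩
    apply Subtype.ext
    push_cast
    simp only [map_add, map_mul, map_intCast]
    ring
  · intro x y hxy
    have h1 := congrArg Subtype.val hxy
    push_cast at h1
    have h2 : ((x : ℤ) : 𝓞 K) + ((y * f : ℤ) : 𝓞 K) * w = 0 := by
      apply FaithfulSMul.algebraMap_injective (𝓞 K) K
      simp only [map_add, map_mul, map_intCast, map_zero]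
      push_cast
      linear_combination h1
    obtain ⟨e1, e2⟩ := h.ind _ _ h2
    refine ⟨e1, ?_⟩
    rcases mul_eq_zero.1 e2 with h | h
    · exact h
    · omega

/-- The least Cartan orbit size `T̃(O, ℓ^a)` on points of order `ℓ^a`,
for the order `O` of conductor `f` in an imaginary quadratic field `K`, with
`k = ord_ℓ(f)`: case (1) `ℓ ∤ f`, split by the behavior of `ℓ` in `O`; case (2) `ℓ ∣ f`,
split by the behavior of `ℓ` in `O_K` and the comparison of `a` with `2k`, `2k+1`. -/
theorem least_orbit_size (K : Type*) [Field K] [NumberField K]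
    (hK : IsImagQuadratic K) (f : ℕ) (hf : 0 < f)
    (O : Subalgebra ℤ K) (hO : IsOrderOfConductor K f O)
    (ℓ : ℕ) (hℓ : ℓ.Prime) (a : ℕ) (ha : 2 < ℓ ^ a) (k : ℕ) (hk : k = f.factorization ℓ) :
    (¬ ℓ ∣ f → SplitsIn (↥O) ℓ →
      IsLeast (orbitSizes (↥O) (ℓ ^ a)) (ℓ ^ (a - 1) * (ℓ - 1))) ∧
    (¬ ℓ ∣ f → ¬ SplitsIn (↥O) ℓ → ¬ InertIn (↥O) ℓ →
      IsLeast (orbitSizes (↥O) (ℓ ^ a)) (ℓ ^ (2 * a - 2) * (ℓ - 1))) ∧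
    (¬ ℓ ∣ f → InertIn (↥O) ℓ →
      IsLeast (orbitSizes (↥O) (ℓ ^ a)) (ℓ ^ (2 * a - 2) * (ℓ ^ 2 - 1))) ∧
    (ℓ ∣ f → SplitsIn (𝓞 K) ℓ →
      IsLeast (orbitSizes (↥O) (ℓ ^ a)) (ℓ ^ (a - 1) * (ℓ - 1))) ∧
    (ℓ ∣ f → InertIn (𝓞 K) ℓ → a ≤ 2 * k →
      IsLeast (orbitSizes (↥O) (ℓ ^ a)) (ℓ ^ (a - 1) * (ℓ - 1))) ∧
    (ℓ ∣ f → InertIn (𝓞 K) ℓ → 2 * k < a →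
      IsLeast (orbitSizes (↥O) (ℓ ^ a)) (ℓ ^ (2 * a - 2 * k - 1) * (ℓ - 1))) ∧
    (ℓ ∣ f → ¬ SplitsIn (𝓞 K) ℓ → ¬ InertIn (𝓞 K) ℓ → a ≤ 2 * k + 1 →
      IsLeast (orbitSizes (↥O) (ℓ ^ a)) (ℓ ^ (a - 1) * (ℓ - 1))) ∧
    (ℓ ∣ f → ¬ SplitsIn (𝓞 K) ℓ → ¬ InertIn (𝓞 K) ℓ → 2 * k + 1 < a →
      IsLeast (orbitSizes (↥O) (ℓ ^ a)) (ℓ ^ (2 * a - 2 * k - 2) * (ℓ - 1))) := by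
  obtain ⟨b, rfl⟩ : ∃ b, a = b + 1 := by
    cases a with
    | zero => simp at ha
    | succ b => exact ⟨b, rfl⟩
  obtain ⟨w, m, t, hB⟩ := exists_QB K hK.1
  obtain ⟨τ, hQ⟩ := order_QB hB hf hO
  have hpp := Nat.prime_iff_prime_int.1 hℓ
  rw [hQ.orbitSizes_eq, show b + 1 - 1 = b by omega, show 2 * (b + 1) - 2 = 2 * b by omega]
  -- the valuation of `f`
  have hkf : (ℓ : ℤ) ^ k ∣ f := by
    have := Nat.ordProj_dvd f ℓ
    rw [← hk] at this
    exact_mod_cast this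
  have hkf' : ¬ (ℓ : ℤ) ^ (k + 1) ∣ f := by
    have := Nat.pow_succ_factorization_not_dvd hf.ne' hℓ
    rw [← hk] at this
    exact_mod_cast this
  have hk2 : (ℓ : ℤ) ^ (2 * k) ∣ (f : ℤ) ^ 2 := by
    rw [mul_comm, pow_mul]
    exact pow_dvd_pow_of_dvd hkf 2
  -- scaling of roots
  have hscale : ∀ r : ℤ, ((f : ℤ) * r) ^ 2 - f * t * (f * r) - f ^ 2 * m
      = f ^ 2 * (r ^ 2 - t * r - m) := by intro r; ring
  -- norm bounds
  have hnorm : ∀ e : ℕ, (∀ u v : ℤ, (ℓ : ℤ) ^ (e + 1) ∣ u ^ 2 + t * u * v - m * v ^ 2 →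
      (ℓ : ℤ) ∣ u ∧ (ℓ : ℤ) ∣ v) → ∀ u v : ℤ,
      (ℓ : ℤ) ^ (2 * k + e + 1) ∣ u ^ 2 + (f * t) * u * v - (f ^ 2 * m) * v ^ 2 →
      (ℓ : ℤ) ∣ u ∧ (ℓ : ℤ) ∣ v := by
    intro e he u v huv
    have e1 : u ^ 2 + (f * t) * u * v - (f ^ 2 * m) * v ^ 2 =
      u ^ 2 + t * u * (f * v) - m * (f * v) ^ 2 := by ring
    rw [e1] at huv
    obtain ⟨g1, g2⟩ := descent hℓ e he k u (f * v) huv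
    refine ⟨(dvd_pow_self _ (Nat.succ_ne_zero k)).trans g1, ?_⟩
    by_contra hv
    exact hkf' (hpp.pow_dvd_of_dvd_mul_right _ hv g2)
  -- the ramified cases
  have hram : (∃ s : ℤ, (ℓ : ℤ) ∣ t - 2 * s ∧ (ℓ : ℤ) ∣ m + s ^ 2) →
      ((b + 1 ≤ 2 * k + 1 → IsLeast (oS (QN (ℓ ^ (b + 1)) (f ^ 2 * m) (f * t)) (ℓ ^ (b + 1)))
        (ℓ ^ b * (ℓ - 1))) ∧
      (2 * k + 1 ≤ b + 1 → IsLeast (oS (QN (ℓ ^ (b + 1)) (f ^ 2 * m) (f * t)) (ℓ ^ (b + 1)))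
        (ℓ ^ (2 * (b + 1) - 2 * k - 2) * (ℓ - 1)))) := by
    rintro ⟨s, h1, h2⟩
    have hroot : (ℓ : ℤ) ^ (2 * k + 1) ∣ ((f : ℤ) * s) ^ 2 - f * t * (f * s) - f ^ 2 * m := by
      rw [hscale, pow_succ]
      refine mul_dvd_mul hk2 ?_
      have e : s ^ 2 - t * s - m = - ((t - 2 * s) * s + (m + s ^ 2)) := by ring
      rw [e, dvd_neg]
      exact dvd_add (h1.mul_right _) h2
    refine ⟨fun hle => ?_, fun hle => ?_⟩
    · exact least_of_root hℓ (f * s) ((pow_dvd_pow _ hle).trans hroot)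
    · have := least_ram (s := f * s) hℓ (m := f ^ 2 * m) (t := f * t)
        (by
          have e : (f : ℤ) * t - 2 * (f * s) = (t - 2 * s) * f := by ring
          rw [e]; exact h1.mul_right _)
        (by
          have e : (f : ℤ) ^ 2 * m + (f * s) ^ 2 = (m + s ^ 2) * f ^ 2 := by ring
          rw [e]; exact h2.mul_right _)
        hle hroot (hnorm 1 (max_order hB hℓ h1 h2))
      rwa [show 2 * (b + 1) - 1 - (2 * k + 1) = 2 * (b + 1) - 2 * k - 2 by omega] at this
  refine ⟨?_, ?_, ?_, ?_, ?_, ?_, ?_, ?_⟩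
  · intro _ hs
    obtain ⟨r, h1, h2⟩ := hQ.mod_root_of_split hℓ hs
    obtain ⟨r', h3, -⟩ := hensel_quad hℓ r h1 h2 b
    exact least_of_root hℓ r' h3
  · intro hd hs hi
    obtain ⟨s, h1, h2⟩ := hQ.ram hℓ hs hi
    have hfd : ¬ (ℓ : ℤ) ∣ f := by exact_mod_cast hd
    have hk0 : k = 0 := by rw [hk]; exact Nat.factorization_eq_zero_of_not_dvd hd
    obtain ⟨x, y, hxy⟩ := (hpp.coprime_iff_not_dvd).2 hfd
    -- `y` is an inverse of `f`
    have := (hram ⟨y * s, ?_, ?_⟩).2 (by omega)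
    · rwa [hk0, show 2 * (b + 1) - 2 * 0 - 2 = 2 * b by omega] at this
    · obtain ⟨c, hc⟩ := h1
      exact ⟨x * t + y * c, by linear_combination y * hc - t * hxy⟩
    · obtain ⟨c, hc⟩ := h2
      refine ⟨y ^ 2 * c + m * x * (1 + y * f), ?_⟩
      linear_combination y ^ 2 * hc - m * (1 + y * f) * hxy
  · intro _ hi
    exact least_inert hℓ (hQ.no_root_of_inert hℓ hi)
  · intro _ hs
    obtain ⟨r, h1, h2⟩ := hB.mod_root_of_split hℓ hs
    obtain ⟨r', h3, -⟩ := hensel_quad hℓ r h1 h2 b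
    refine least_of_root hℓ (f * r') ?_
    rw [hscale]
    exact h3.mul_left _
  · intro _ _ hle
    refine least_of_root hℓ (f * 0) ?_
    rw [hscale]
    exact ((pow_dvd_pow _ hle).trans hk2).mul_right _
  · intro hd hi hlt
    have hfd : (ℓ : ℤ) ∣ f := by exact_mod_cast hd
    have hnr := hB.no_root_of_inert hℓ hi
    have := least_ram (s := 0) (r := f * 0) (M := 2 * k) (b := b) hℓ (m := f ^ 2 * m) (t := f * t)
      (by
        have e : (f : ℤ) * t - 2 * 0 = f * t := by ring
        rw [e]; exact hfd.mul_right _)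
      (by
        have e : (f : ℤ) ^ 2 * m + 0 ^ 2 = f * (f * m) := by ring
        rw [e]; exact hfd.mul_right _)
      hlt.le
      (by rw [hscale]; exact hk2.mul_right _)
      (hnorm 0 (fun u v h => norm_prim hℓ hnr u v (by simpa using h)))
    rwa [show 2 * (b + 1) - 1 - 2 * k = 2 * (b + 1) - 2 * k - 1 by omega] at this
  · intro _ hs hi hle
    exact (hram (hB.ram hℓ hs hi)).1 hle
  · intro _ hs hi hlt
    exact (hram (hB.ram hℓ hs hi)).2 hlt.le
end
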